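/- Fix integers β ≥ 1 and α ≥ 1. Let c = 2 if α is even and c = 1 if α is odd, and let χ(X) = ∏_{i=1}^{β+1−c} (1 − X·(1 − 2i/β)^α)^{binom(β,i)}. Then for every sequence m : ℕ → ℕ for which there exist 0 < a ≤ b < 1/2 with a ≤ m(n)/n ≤ b for all large n, the ratio P_SAT(n, m(n)) / [ χ(2m/n)^{−2^{−β−2}} · (1 − 2m/n)^{1/2 − c·2^{−β−2}} ] tends to 1 as n → ∞ (where m = m(n)). -/

import Mathlib

/-!
A set of equations `y i + y j = b` over a group of exponent two becomes unsatisfiable under a new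
equation only when that equation closes a cycle of the constraint graph with nonzero label sum.
Below density `1 / 2` the cycles through a random new edge are short and almost always unique, and
a cycle through `k + 1` clauses occurs with probability about `(2 m / n) ^ k / n`. Hence the
probability `p m` that `m` clauses are satisfiable obeys `n * (p m - p (m + 1)) ≈ F (2 m / n) * p m`
up to `O(1 / n)`, where `F t = ∑ k, w (k + 1) * t ^ k` and `w k` is the probability that `k` random
labels do not sum to zero. This is the Euler scheme of `L' = -F L / 2`, so `p m ≈ L (2 m / n)`.
Quantifying over `x` amounts to solving the system in the group of functions of `x`; there the
sign characters of `ℤ/2` evaluate `w k` as a combination of powers of `(1 - 2 i / β) ^ α`, whence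
the product formula for `L`.
-/

namespace Inhomog

noncomputable section
/-- A quantified 2-Xor formula `φ` (a list of `m` clauses, each a tuple
`(i, j, e, b)`) is satisfiable if for every assignment `x` of the `β` universal
variables there is an assignment `y` of the `n` existential variables satisfying
every clause `y i + y j = Σ_k x (e k) + b`. -/
def Satisfiable {n m α β : ℕ}
    (φ : Fin m → Fin n × Fin n × (Fin α → Fin β) × ZMod 2) : Prop :=
  ∀ x : Fin β → ZMod 2, ∃ y : Fin n → ZMod 2,
    ∀ i : Fin m, y (φ i).1 + y (φ i).2.1 = (∑ k : Fin α, x ((φ i).2.2.1 k)) + (φ i).2.2.2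

/-- Probability that a uniformly random quantified 2-Xor formula with `m` clauses,
`n` existential variables, `β` universal variables, `α` universal occurrences per
clause and a constant term is satisfiable. -/
def PSAT (α β n m : ℕ) : ℝ :=
  (Nat.card {φ : Fin m → Fin n × Fin n × (Fin α → Fin β) × ZMod 2 // Satisfiable φ} : ℝ) /
    ((n : ℝ) ^ 2 * (β : ℝ) ^ α * 2) ^ m

section UniformProbability

/-- The probability of the event `s` under the uniform distribution on the finite type `Ω`.
Counting with `Set.ncard` and `Nat.card` avoids decidability and `Fintype` instances. -/
def prob {Ω : Type*} (s : Set Ω) : ℝ := s.ncard / Nat.card Ω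

variable {Ω Ω' ι : Type*}

theorem prob_nonneg (s : Set Ω) : 0 ≤ prob s := by unfold prob; positivity

theorem prob_empty : prob (∅ : Set Ω) = 0 := by simp [prob]

theorem prob_univ [Finite Ω] [Nonempty Ω] : prob (Set.univ : Set Ω) = 1 := by
  rw [prob, Set.ncard_univ, div_self (Nat.cast_ne_zero.2 Nat.card_pos.ne')]

theorem prob_mono [Finite Ω] {s t : Set Ω} (h : s ⊆ t) : prob s ≤ prob t := by
  unfold prob
  gcongr
  exact t.toFinite

theorem prob_le_one [Finite Ω] [Nonempty Ω] (s : Set Ω) : prob s ≤ 1 :=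
  prob_univ (Ω := Ω) ▸ prob_mono s.subset_univ

theorem prob_sdiff [Finite Ω] {s t : Set Ω} (h : s ⊆ t) : prob (t \ s) = prob t - prob s := by
  rw [prob, Set.ncard_sdiff h, Nat.cast_sub (Set.ncard_le_ncard h), sub_div, prob, prob]

theorem prob_singleton (x : Ω) : prob {x} = (Nat.card Ω : ℝ)⁻¹ := by simp [prob]

theorem prob_pair {x y : Ω} (h : x ≠ y) : prob {x, y} = 2 / Nat.card Ω := by
  simp [prob, Set.ncard_pair h]

theorem prob_preimage_equiv (e : Ω ≃ Ω') (s : Set Ω') : prob (e ⁻¹' s) = prob s := by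
  rw [prob, prob, Nat.card_congr e,
    Set.ncard_preimage_of_injective_subset_range e.injective (by simp [e.range_eq_univ])]

theorem prob_prod (s : Set Ω) (t : Set Ω') : prob (s ×ˢ t) = prob s * prob t := by
  simp only [prob, Set.ncard_prod, Nat.card_prod, Nat.cast_mul, div_mul_div_comm]

theorem prob_pi {X : ι → Type*} [Fintype ι] (s : ∀ i, Set (X i)) :
    prob (Set.univ.pi s) = ∏ i, prob (s i) := by
  simp only [prob, Finset.prod_div_distrib, Nat.card_pi, Nat.cast_prod,
    ← Nat.card_coe_set_eq, Nat.card_congr (Equiv.Set.univPi s)]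

theorem prob_sub_prob_compl_le [Finite Ω] (s t : Set Ω) : prob s - prob tᶜ ≤ prob (s ∩ t) := by
  rw [← Set.sdiff_compl, ← Set.sdiff_inter_self_eq_sdiff, prob_sdiff Set.inter_subset_right]
  exact sub_le_sub_left (prob_mono Set.inter_subset_left) _

theorem prob_iUnion_le [Fintype ι] (s : ι → Set Ω) : prob (⋃ i, s i) ≤ ∑ i, prob (s i) := by
  simp only [prob, ← Finset.sum_div, ← Nat.cast_sum]
  gcongr
  exact Set.ncard_iUnion_le_of_fintype s

theorem prob_iUnion [Fintype ι] [Finite Ω] {s : ι → Set Ω}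
    (h : Pairwise (Function.onFun Disjoint s)) : prob (⋃ i, s i) = ∑ i, prob (s i) := by
  simp only [prob, ← Finset.sum_div, ← Nat.cast_sum]
  rw [Set.ncard_iUnion_of_finite (fun i => (s i).toFinite) h, finsum_eq_sum_of_fintype]

open scoped BigOperators in
theorem prob_eq_expect [Fintype Ω] (s : Set Ω) [DecidablePred (· ∈ s)] :
    prob s = 𝔼 x, if x ∈ s then (1 : ℝ) else 0 := by
  rw [Fintype.expect_eq_sum_div_card, Finset.sum_boole, prob, Nat.card_eq_fintype_card,
    Set.ncard_eq_toFinset_card']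
  congr 3
  ext; simp

end UniformProbability

section Deterministic

variable {V Λ G ι κ : Type*}

/-- The clause `(u, w, q)` is the equation `Y u + Y w = l q`, where `l : Λ → G` interprets the
label `q` in the group of values. -/
abbrev Clause (V Λ : Type*) := V × V × Λ

/-- The edge joining the two variables of a clause; it is a loop if they coincide. -/
def edge (e : Clause V Λ) : Sym2 V := s(e.1, e.2.1)

/-- The graph on the variables of a formula whose edges are the edges of its clauses, loops
removed. -/
def constraintGraph (φ : ι → Clause V Λ) : SimpleGraph V :=
  SimpleGraph.fromEdgeSet (Set.range fun i => edge (φ i))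

/-- `Y` satisfies all clauses of `φ`. -/
def IsSolution [Add G] (l : Λ → G) (φ : ι → Clause V Λ) (Y : V → G) : Prop :=
  ∀ i, Y (φ i).1 + Y (φ i).2.1 = l (φ i).2.2

/-- The formula `φ` has a solution in `G`. -/
def IsSatisfiable [Add G] (l : Λ → G) (φ : ι → Clause V Λ) : Prop :=
  ∃ Y, IsSolution l φ Y

/-- No solution of `φ` satisfies the clause `e`. -/
def Contradicts [Add G] (l : Λ → G) (e : Clause V Λ) (φ : ι → Clause V Λ) : Prop :=
  ∀ Y, IsSolution l φ Y → Y e.1 + Y e.2.1 ≠ l e.2.2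

/-- The consecutive clauses `ψ` have the consecutive edges of the walk with vertices `v`. -/
def IsPath {k : ℕ} (v : Fin (k + 1) → V) (ψ : Fin k → Clause V Λ) : Prop :=
  ∀ a, edge (ψ a) = s(v a.castSucc, v a.succ)

/-- The clause `e` closes the path `ψ` with vertices `v` to a cycle along which the labels do not
add up to zero. -/
structure IsContradictoryCycle [AddCommMonoid G] (l : Λ → G) {k : ℕ} (v : Fin (k + 1) → V)
    (e : Clause V Λ) (ψ : Fin k → Clause V Λ) : Prop where
  fst_eq : e.1 = v 0
  snd_eq : e.2.1 = v (Fin.last k)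
  isPath : IsPath v ψ
  sum_ne : l e.2.2 + ∑ a, l (ψ a).2.2 ≠ 0

/-- The variables `v` lie in pairwise different components of the constraint graph of `φ`. -/
def IsSeparated (v : κ → V) (φ : ι → Clause V Λ) : Prop :=
  Pairwise fun a b => ¬ (constraintGraph φ).Reachable (v a) (v b)

/-- The formula `φ` without the clauses at the positions `pos`. -/
def remaining (pos : κ → ι) (φ : ι → Clause V Λ) : ↥(Set.range pos)ᶜ → Clause V Λ :=
  Set.domRestrict (Set.range pos)ᶜ φ

theorem reachable_iff_of_edge_eq {φ : ι → Clause V Λ} {i : ι} {u w : V}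
    (h : edge (φ i) = s(u, w)) (x : V) :
    (constraintGraph φ).Reachable x u ↔ (constraintGraph φ).Reachable x w := by
  have huw : (constraintGraph φ).Reachable u w := by
    rcases eq_or_ne u w with rfl | hne
    · rfl
    · exact SimpleGraph.Adj.reachable ((SimpleGraph.fromEdgeSet_adj _).2 ⟨⟨i, h⟩, hne⟩)
  exact ⟨fun hx => hx.trans huw, fun hx => hx.trans huw.symm⟩

theorem add_eq_of_edge_eq [AddCommMagma G] {e : Clause V Λ} {u w : V} (h : edge e = s(u, w))
    (Y : V → G) : Y e.1 + Y e.2.1 = Y u + Y w := by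
  rcases Sym2.eq_iff.1 h with ⟨h₁, h₂⟩ | ⟨h₁, h₂⟩
  · rw [h₁, h₂]
  · rw [h₁, h₂, add_comm]

theorem IsPath.isSolution_iff [AddCommMagma G] {l : Λ → G} {k : ℕ} {v : Fin (k + 1) → V}
    {ψ : Fin k → Clause V Λ} (hv : IsPath v ψ) {Y : V → G} :
    IsSolution l ψ Y ↔ ∀ a, Y (v a.castSucc) + Y (v a.succ) = l (ψ a).2.2 :=
  forall_congr' fun a => by rw [add_eq_of_edge_eq (hv a)]

theorem IsPath.injective_pos {φ : ι → Clause V Λ} {k : ℕ} {v : Fin (k + 1) → V} {pos : Fin k → ι}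
    (hv : Function.Injective v) (hpath : IsPath v (φ ∘ pos)) : Function.Injective pos := by
  intro a b hab
  have hedges : s(v a.castSucc, v a.succ) = s(v b.castSucc, v b.succ) := by
    rw [← hpath a, ← hpath b, Function.comp, Function.comp, hab]
  rcases Sym2.eq_iff.1 hedges with ⟨h, -⟩ | ⟨h, h'⟩
  · exact Fin.castSucc_injective _ (hv h)
  · have h₁ := congrArg Fin.val (hv h)
    have h₂ := congrArg Fin.val (hv h')
    simp only [Fin.val_castSucc, Fin.val_succ] at h₁ h₂
    omega

theorem exists_isPath_of_reachable {φ : ι → Clause V Λ} {u w : V}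
    (h : (constraintGraph φ).Reachable u w) :
    ∃ (k : ℕ) (v : Fin (k + 1) ↪ V) (pos : Fin k ↪ ι),
      v 0 = u ∧ v (Fin.last k) = w ∧ IsPath v (φ ∘ pos) := by
  obtain ⟨p, hp⟩ := h.exists_isPath
  have hinj : Function.Injective fun a : Fin (p.length + 1) => p.getVert a := fun a b hab =>
    Fin.ext (hp.getVert_injOn (Nat.le_of_lt_succ a.2) (Nat.le_of_lt_succ b.2) hab)
  have hedge (a : Fin p.length) : ∃ i, edge (φ i) = s(p.getVert a, p.getVert (a + 1)) :=
    ((SimpleGraph.fromEdgeSet_adj _).1 (p.adj_getVert_succ a.2)).1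
  choose pos hpos using hedge
  have hpath : IsPath (fun a : Fin (p.length + 1) => p.getVert a) (φ ∘ pos) := hpos
  exact ⟨p.length, ⟨_, hinj⟩, ⟨pos, hpath.injective_pos hinj⟩, by simp, by simp, hpath⟩

theorem IsSolution.comp [Add G] {l : Λ → G} {φ : ι → Clause V Λ} {Y : V → G}
    (hY : IsSolution l φ Y) (pos : κ → ι) : IsSolution l (φ ∘ pos) Y :=
  fun a => hY (pos a)

theorem IsSatisfiable.remaining [Add G] {l : Λ → G} {φ : ι → Clause V Λ}
    (h : IsSatisfiable l φ) (pos : κ → ι) : IsSatisfiable l (remaining pos φ) :=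
  h.imp fun _ hY i => hY i

section CharTwo

variable [AddCommGroup G] [Module (ZMod 2) G] {l : Λ → G}

theorem IsSolution.add_of_eq {φ : ι → Clause V Λ} {Y D : V → G} (hY : IsSolution l φ Y)
    (hD : ∀ i, D (φ i).1 = D (φ i).2.1) : IsSolution l φ (Y + D) := fun i => by
  rw [Pi.add_apply, Pi.add_apply, hD i, add_add_add_comm, ZModModule.add_self, add_zero, hY i]

theorem sum_castSucc_add_succ {k : ℕ} (c : Fin (k + 1) → G) :
    ∑ a : Fin k, (c a.castSucc + c a.succ) = c 0 + c (Fin.last k) := by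
  induction k with
  | zero => exact (ZModModule.add_self _).symm
  | succ k ih =>
    rw [Fin.sum_univ_succ]
    exact (congrArg _ (ih fun a => c a.succ)).trans (ZModModule.add_add_add_cancel _ _ _)

theorem IsSolution.add_eq_sum_of_isPath {Y : V → G} {k : ℕ} {v : Fin (k + 1) → V}
    {ψ : Fin k → Clause V Λ} (hY : IsSolution l ψ Y) (hv : IsPath v ψ) :
    Y (v 0) + Y (v (Fin.last k)) = ∑ a, l (ψ a).2.2 :=
  (sum_castSucc_add_succ (Y ∘ v)).symm.trans
    (Finset.sum_congr rfl fun a _ => hv.isSolution_iff.1 hY a)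

theorem IsSolution.exists_reachable_of_contradicts {e : Clause V Λ} {φ : ι → Clause V Λ} {Y : V → G}
    (hY : IsSolution l φ Y) (he : Contradicts l e φ) :
    (constraintGraph φ).Reachable e.1 e.2.1 := by
  classical
  by_contra hreach
  let D : V → G := fun u =>
    if (constraintGraph φ).Reachable e.1 u then Y e.1 + Y e.2.1 + l e.2.2 else 0
  have hD (i : ι) : D (φ i).1 = D (φ i).2.1 :=
    if_congr (reachable_iff_of_edge_eq (i := i) rfl e.1) rfl rfl
  refine he (Y + D) (hY.add_of_eq hD) ?_
  have h₁ : D e.1 = Y e.1 + Y e.2.1 + l e.2.2 := if_pos (SimpleGraph.Reachable.refl _)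
  have h₂ : D e.2.1 = 0 := if_neg hreach
  rw [Pi.add_apply, Pi.add_apply, add_add_add_comm, h₁, h₂, add_zero, ← add_assoc,
    ZModModule.add_self, zero_add]

theorem IsSatisfiable.exists_isContradictoryCycle {e : Clause V Λ} {φ : ι → Clause V Λ}
    (hφ : IsSatisfiable l φ) (he : Contradicts l e φ) :
    ∃ (k : ℕ) (v : Fin (k + 1) ↪ V) (pos : Fin k ↪ ι), IsContradictoryCycle l v e (φ ∘ pos) := by
  obtain ⟨Y, hY⟩ := hφ
  obtain ⟨k, v, pos, h0, hk, hpath⟩ :=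
    exists_isPath_of_reachable (hY.exists_reachable_of_contradicts he)
  refine ⟨k, v, pos, h0.symm, hk.symm, hpath, fun hsum => he Y hY ?_⟩
  have hlabels := (hY.comp pos).add_eq_sum_of_isPath hpath
  rw [h0, hk] at hlabels
  rw [hlabels, eq_neg_of_add_eq_zero_right hsum, ZModModule.neg_eq_self]

theorem IsContradictoryCycle.contradicts {k : ℕ} {v : Fin (k + 1) → V} {e : Clause V Λ}
    {φ : ι → Clause V Λ} {pos : Fin k → ι} (h : IsContradictoryCycle l v e (φ ∘ pos)) :
    Contradicts l e φ := by
  intro Y hY he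
  apply h.sum_ne
  have hlabels := (hY.comp pos).add_eq_sum_of_isPath h.isPath
  rw [← h.fst_eq, ← h.snd_eq, he] at hlabels
  rw [← hlabels, ZModModule.add_self]

theorem IsSatisfiable.exists_isSolution_of_isSeparated [Finite κ] {φ : ι → Clause V Λ} {v : κ → V}
    (hφ : IsSatisfiable l φ) (hv : IsSeparated v φ) (c : κ → G) :
    ∃ Y, IsSolution l φ Y ∧ ∀ a, Y (v a) = c a := by
  classical
  cases nonempty_fintype κ
  obtain ⟨Y, hY⟩ := hφ
  let D : V → G := fun u =>
    ∑ a, if (constraintGraph φ).Reachable (v a) u then Y (v a) + c a else 0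
  have hD (b : κ) : D (v b) = Y (v b) + c b := by
    refine (Finset.sum_eq_single b (fun a _ hab => if_neg (hv hab)) (by simp)).trans ?_
    exact if_pos (SimpleGraph.Reachable.refl _)
  refine ⟨Y + D, hY.add_of_eq fun i => Finset.sum_congr rfl fun a _ => ?_, fun b => ?_⟩
  · exact if_congr (reachable_iff_of_edge_eq (i := i) rfl (v a)) rfl rfl
  · rw [Pi.add_apply, hD, ← add_assoc, ZModModule.add_self, zero_add]

theorem IsPath.isSatisfiable_of_isSeparated {φ : ι → Clause V Λ} {k : ℕ} {v : Fin (k + 1) → V}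
    {pos : Fin k → ι} (hpath : IsPath v (φ ∘ pos)) (hsat : IsSatisfiable l (remaining pos φ))
    (hsep : IsSeparated v (remaining pos φ)) : IsSatisfiable l φ := by
  obtain ⟨Y, hY, hYv⟩ := hsat.exists_isSolution_of_isSeparated hsep
    (Fin.partialSum fun a => l (φ (pos a)).2.2)
  have hYpath : IsSolution l (φ ∘ pos) Y := hpath.isSolution_iff.2 fun a => by
    rw [hYv, hYv, Fin.partialSum_succ, ← add_assoc, ZModModule.add_self, zero_add]; rfl
  refine ⟨Y, fun i => ?_⟩
  by_cases hi : i ∈ Set.range pos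
  · obtain ⟨a, rfl⟩ := hi
    exact hYpath a
  · exact hY ⟨i, hi⟩

end CharTwo

-- Removing the clause at `pos j` cuts the path; `side` is the part behind the cut, and only that
-- clause crosses it.
theorem IsPath.mem_range_of_isSeparated {φ : ι → Clause V Λ} {k k' : ℕ} {v : Fin (k + 1) → V}
    {pos : Fin k → ι} (hpath : IsPath v (φ ∘ pos)) (hsep : IsSeparated v (remaining pos φ))
    {v' : Fin (k' + 1) → V} {pos' : Fin k' → ι} (hpath' : IsPath v' (φ ∘ pos'))
    (h0 : v' 0 = v 0) (hlast : v' (Fin.last k') = v (Fin.last k)) (j : Fin k) :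
    pos j ∈ Set.range pos' := by
  by_contra hj
  let side (u : V) : Prop := ∃ a, j.castSucc < a ∧
    (constraintGraph (remaining pos φ)).Reachable (v a) u
  have side_iff (b : Fin (k + 1)) : side (v b) ↔ j.castSucc < b := by
    refine ⟨fun ⟨a, ha, hr⟩ => ?_, fun hb => ⟨b, hb, SimpleGraph.Reachable.refl _⟩⟩
    by_contra hb
    exact hsep (fun hab : a = b => hb (hab ▸ ha)) hr
  have side_congr {i : ι} {u w : V} (hij : i ≠ pos j) (hi : edge (φ i) = s(u, w)) :
      side u ↔ side w := by
    by_cases hmem : i ∈ Set.range pos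
    · obtain ⟨a, rfl⟩ := hmem
      have ha : side (v a.castSucc) ↔ side (v a.succ) := by
        have hne : (a : ℕ) ≠ j := fun h => hij (congrArg pos (Fin.ext h))
        rw [side_iff, side_iff, Fin.lt_def, Fin.lt_def, Fin.val_castSucc, Fin.val_succ,
          Fin.val_castSucc]
        omega
      rcases Sym2.eq_iff.1 (hi.symm.trans (hpath a)) with ⟨rfl, rfl⟩ | ⟨rfl, rfl⟩
      exacts [ha, ha.symm]
    · exact exists_congr fun a => and_congr_right fun _ =>
        reachable_iff_of_edge_eq (φ := remaining pos φ) (i := ⟨i, hmem⟩) hi (v a)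
  have side_path (b : Fin (k' + 1)) : side (v' b) ↔ side (v' 0) := by
    induction b using Fin.induction with
    | zero => rfl
    | succ a ih => exact (side_congr (fun h => hj ⟨a, h⟩) (hpath' a)).symm.trans ih
  have hends := side_path (Fin.last k')
  rw [hlast, h0, side_iff, side_iff] at hends
  exact Fin.not_lt_zero _ (hends.1 (Fin.castSucc_lt_last j))

theorem IsPath.eq_of_forall_mem_range {φ : ι → Clause V Λ} {k : ℕ} {v v' : Fin (k + 1) ↪ V}
    {pos pos' : Fin k ↪ ι} (hpath : IsPath v (φ ∘ pos)) (hpath' : IsPath v' (φ ∘ pos'))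
    (h0 : v' 0 = v 0) (hmem : ∀ j, pos' j ∈ Set.range pos) : v' = v ∧ pos' = pos := by
  have agree (b : Fin (k + 1)) : v' b = v b ∧ ∀ a : Fin k, a.castSucc < b → pos' a = pos a := by
    induction b using Fin.induction with
    | zero => exact ⟨h0, fun a ha => absurd ha (Fin.not_lt_zero _)⟩
    | succ a ih =>
      obtain ⟨j, hj⟩ := hmem a
      have hedges : s(v a.castSucc, v' a.succ) = s(v j.castSucc, v j.succ) := by
        rw [← ih.1, ← hpath' a, ← hpath j, Function.comp, Function.comp, hj]
      have hja : j = a := by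
        rcases Sym2.eq_iff.1 hedges with ⟨h, -⟩ | ⟨h, -⟩
        · exact (Fin.castSucc_injective _ (v.injective h)).symm
        · have hlt : j.castSucc < a.castSucc := v.injective h ▸ Fin.castSucc_lt_succ
          exact pos'.injective ((ih.2 j hlt).trans hj)
      subst hja
      refine ⟨Sym2.congr_right.1 hedges, fun i hi => ?_⟩
      rcases (Fin.castSucc_lt_succ_iff.1 hi).lt_or_eq with h | rfl
      · exact ih.2 i (Fin.castSucc_lt_castSucc_iff.2 h)
      · exact hj.symm
  exact ⟨DFunLike.ext _ _ fun b => (agree b).1,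
    DFunLike.ext _ _ fun a => (agree (Fin.last k)).2 a (Fin.castSucc_lt_last a)⟩

theorem IsPath.unique_of_isSeparated {φ : ι → Clause V Λ} {k k' : ℕ} {v : Fin (k + 1) ↪ V}
    {pos : Fin k ↪ ι} {v' : Fin (k' + 1) ↪ V} {pos' : Fin k' ↪ ι}
    (hpath : IsPath v (φ ∘ pos)) (hsep : IsSeparated v (remaining pos φ))
    (hpath' : IsPath v' (φ ∘ pos')) (hsep' : IsSeparated v' (remaining pos' φ))
    (h0 : v' 0 = v 0) (hlast : v' (Fin.last k') = v (Fin.last k)) :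
    (⟨k', v', pos'⟩ : Σ k : ℕ, (Fin (k + 1) ↪ V) × (Fin k ↪ ι)) = ⟨k, v, pos⟩ := by
  have hmem := hpath.mem_range_of_isSeparated hsep hpath' h0 hlast
  have hmem' := hpath'.mem_range_of_isSeparated hsep' hpath h0.symm hlast.symm
  obtain rfl : k' = k := by
    have hrange : Set.range pos' = Set.range pos :=
      (Set.range_subset_iff.2 hmem').antisymm (Set.range_subset_iff.2 hmem)
    simpa [Set.ncard_range_of_injective, pos.injective, pos'.injective]
      using congrArg Set.ncard hrange
  obtain ⟨rfl, rfl⟩ := hpath.eq_of_forall_mem_range hpath' h0 hmem'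
  rfl

end Deterministic

section RandomFormulas

variable {V Λ G ι κ : Type*}

/-- A function on `ι` amounts to its values along `pos` and its restriction to the complement. -/
def arrowEquivProd (C : Type*) (pos : κ ↪ ι) : (ι → C) ≃ (κ → C) × (↥(Set.range pos)ᶜ → C) :=
  open scoped Classical in
  let positions : κ ⊕ ↥(Set.range pos)ᶜ ≃ ι :=
    (Equiv.sumCongr (Equiv.ofInjective pos pos.injective) (Equiv.refl _)).trans
      (Equiv.Set.sumCompl (Set.range pos))
  (Equiv.arrowCongr positions.symm (Equiv.refl C)).trans (Equiv.sumArrowEquivProdArrow _ _ _)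

theorem prob_comp_embedding {C : Type*} [Finite C] [Nonempty C] [Finite ι] (pos : κ ↪ ι)
    (A : Set (κ → C)) : prob {φ : ι → C | φ ∘ pos ∈ A} = prob A := by
  rw [← mul_one (prob A), ← prob_univ (Ω := ↥(Set.range pos)ᶜ → C), ← prob_prod,
    ← prob_preimage_equiv (arrowEquivProd C pos)]
  congr 1
  ext φ
  exact (and_iff_left trivial).symm

theorem prob_remaining_inter {D : Type*} (pos : κ ↪ ι) (A : Set (D × (κ → Clause V Λ)))
    (B : Set (↥(Set.range pos)ᶜ → Clause V Λ)) :
    prob {x : D × (ι → Clause V Λ) | (x.1, x.2 ∘ pos) ∈ A ∧ remaining pos x.2 ∈ B} =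
      prob A * prob B := by
  rw [← prob_prod, ← prob_preimage_equiv
    ((Equiv.prodCongr (Equiv.refl D) (arrowEquivProd _ pos)).trans (Equiv.prodAssoc _ _ _).symm)]
  rfl

/-- The probability that `m` independent uniform clauses on the variables `V` with labels in `Λ`
have a common solution. -/
def satProb (V : Type*) [Add G] (l : Λ → G) (m : ℕ) : ℝ :=
  prob {φ : Fin m → Clause V Λ | IsSatisfiable l φ}

/-- The probability that `k` independent uniform labels do not add up to zero. -/
def nonzeroSumProb [AddCommMonoid G] (l : Λ → G) (k : ℕ) : ℝ :=
  prob {q : Fin k → Λ | ∑ a, l (q a) ≠ 0}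

theorem prob_isSatisfiable [Add G] [Finite ι] (l : Λ → G) :
    prob {φ : ι → Clause V Λ | IsSatisfiable l φ} = satProb V l (Nat.card ι) := by
  let e := (Finite.equivFin ι).arrowCongr (Equiv.refl (Clause V Λ))
  rw [satProb, ← prob_preimage_equiv e]
  congr 1
  ext φ
  exact exists_congr fun Y => (Finite.equivFin ι).forall_congr_left

theorem isSatisfiable_cons_iff [Add G] {l : Λ → G} {m : ℕ} {e : Clause V Λ}
    {φ : Fin m → Clause V Λ} : IsSatisfiable l (Fin.cons e φ : Fin (m + 1) → Clause V Λ) ↔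
      IsSatisfiable l φ ∧ ¬ Contradicts l e φ := by
  have hcons (Y : V → G) : IsSolution l (Fin.cons e φ : Fin (m + 1) → Clause V Λ) Y ↔
      Y e.1 + Y e.2.1 = l e.2.2 ∧ IsSolution l φ Y := Fin.forall_fin_succ
  simp only [IsSatisfiable, hcons, Contradicts, not_forall, not_not, exists_prop]
  exact ⟨fun ⟨Y, he, hY⟩ => ⟨⟨Y, hY⟩, Y, hY, he⟩, fun ⟨_, Y, hY, he⟩ => ⟨Y, he, hY⟩⟩

theorem satProb_zero [Add G] [Nonempty G] (l : Λ → G) : satProb V l 0 = 1 := by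
  have hall : {φ : Fin 0 → Clause V Λ | IsSatisfiable l φ} = Set.univ :=
    Set.eq_univ_of_forall fun φ => ⟨fun _ => Classical.arbitrary G, fun i => i.elim0⟩
  rw [satProb, hall, prob_univ]

theorem prob_sym2_mk_eq {u w : V} (h : u ≠ w) :
    prob {p : V × V | s(p.1, p.2) = s(u, w)} = 2 / (Nat.card V : ℝ) ^ 2 := by
  have hset : {p : V × V | s(p.1, p.2) = s(u, w)} = {(u, w), (w, u)} := by
    ext p
    simp [Prod.ext_iff]
  rw [hset, prob_pair fun hp => h (congrArg Prod.fst hp), Nat.card_prod, Nat.cast_mul, sq]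

theorem prob_edge_eq [Finite Λ] [Nonempty Λ] {u w : V} (h : u ≠ w) :
    prob {e : Clause V Λ | edge e = s(u, w)} = 2 / (Nat.card V : ℝ) ^ 2 := by
  rw [← prob_sym2_mk_eq h, ← mul_one (prob {p : V × V | _}), ← prob_univ (Ω := Λ), ← prob_prod,
    ← prob_preimage_equiv (Equiv.prodAssoc V V Λ).symm]
  congr 1
  ext e
  simp [edge]

theorem castSucc_ne_succ_of_embedding {k : ℕ} (v : Fin (k + 1) ↪ V) (a : Fin k) :
    v a.castSucc ≠ v a.succ :=
  fun h => Fin.castSucc_lt_succ.ne (v.injective h)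

theorem prob_isPath [Finite Λ] [Nonempty Λ] {k : ℕ} (v : Fin (k + 1) ↪ V) :
    prob {ψ : Fin k → Clause V Λ | IsPath v ψ} = (2 / (Nat.card V : ℝ) ^ 2) ^ k := by
  have hset : {ψ : Fin k → Clause V Λ | IsPath v ψ} =
      Set.univ.pi fun a => {e | edge e = s(v a.castSucc, v a.succ)} := by
    ext ψ
    simp [IsPath]
  simp only [hset, prob_pi, prob_edge_eq (castSucc_ne_succ_of_embedding v _), Finset.prod_const,
    Finset.card_univ, Fintype.card_fin]

theorem prob_isContradictoryCycle [AddCommMonoid G] (l : Λ → G) {k : ℕ} (v : Fin (k + 1) ↪ V) :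
    prob {x : Clause V Λ × (Fin k → Clause V Λ) | IsContradictoryCycle l v x.1 x.2} =
      1 / (Nat.card V : ℝ) ^ 2 * (2 / (Nat.card V : ℝ) ^ 2) ^ k * nonzeroSumProb l (k + 1) := by
  let assoc := (Equiv.prodAssoc V V Λ).symm
  let unzip : Clause V Λ × (Fin k → Clause V Λ) ≃
      ((V × V) × (Fin k → V × V)) × (Fin (k + 1) → Λ) :=
    (Equiv.prodCongr assoc ((Equiv.arrowCongr (Equiv.refl _) assoc).trans
      (Equiv.arrowProdEquivProdArrow (Fin k) (fun _ => V × V) fun _ => Λ))).trans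
      ((Equiv.prodProdProdComm _ _ _ _).trans
        (Equiv.prodCongr (Equiv.refl _) (Fin.consEquiv fun _ => Λ)))
  have hset : {x : Clause V Λ × (Fin k → Clause V Λ) | IsContradictoryCycle l v x.1 x.2} =
      unzip ⁻¹' (({(v 0, v (Fin.last k))} ×ˢ
        Set.univ.pi fun a => {p | s(p.1, p.2) = s(v a.castSucc, v a.succ)}) ×ˢ
          {q : Fin (k + 1) → Λ | ∑ a, l (q a) ≠ 0}) := by
    ext ⟨e, ψ⟩
    have hsum : ∑ a, l ((unzip (e, ψ)).2 a) = l e.2.2 + ∑ a, l (ψ a).2.2 := Fin.sum_univ_succ _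
    rw [Set.mem_preimage, Set.mem_prod, Set.mem_prod, Set.mem_singleton_iff, Prod.ext_iff,
      Set.mem_univ_pi, Set.mem_ofPred_eq, Set.mem_ofPred_eq, hsum]
    exact ⟨fun h => ⟨⟨⟨h.fst_eq, h.snd_eq⟩, h.isPath⟩, h.sum_ne⟩,
      fun h => ⟨h.1.1.1, h.1.1.2, h.1.2, h.2⟩⟩
  simp only [hset, prob_preimage_equiv, prob_prod, prob_pi,
    prob_sym2_mk_eq (castSucc_ne_succ_of_embedding v _), prob_singleton, Finset.prod_const,
    Finset.card_univ, Fintype.card_fin, Nat.card_prod, Nat.cast_pow, nonzeroSumProb, ← sq,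
    one_div]

theorem lt_card_of_embedding [Finite V] {k : ℕ} (v : Fin (k + 1) ↪ V) : k < Nat.card V := by
  simpa using Nat.card_le_card_of_injective v v.injective

theorem ncard_embedding_ends_mul_le [Finite V] {u w : V} (huw : u ≠ w) (k : ℕ) :
    {v : Fin (k + 1) ↪ V | v 0 = u ∧ v (Fin.last k) = w}.ncard * Nat.card V ≤ Nat.card V ^ k := by
  cases k with
  | zero =>
    have hempty : {v : Fin 1 ↪ V | v 0 = u ∧ v (Fin.last 0) = w} = ∅ :=
      Set.eq_empty_of_forall_notMem fun v hv => huw (hv.1.symm.trans hv.2)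
    rw [hempty, Set.ncard_empty, zero_mul]
    exact Nat.zero_le _
  | succ k =>
    have hinj : Set.InjOn (fun (v : Fin (k + 2) ↪ V) (a : Fin k) => v a.castSucc.succ)
        {v | v 0 = u ∧ v (Fin.last (k + 1)) = w} := by
      rintro v ⟨hv0, hvlast⟩ v' ⟨hv0', hvlast'⟩ heq
      ext b
      induction b using Fin.cases with
      | zero => rw [hv0, hv0']
      | succ b =>
        induction b using Fin.lastCases with
        | last => exact hvlast.trans hvlast'.symm
        | cast b => exact congrFun heq b
    have hle := Set.ncard_le_ncard_of_injOn _ (fun _ _ => Set.mem_univ _) hinj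
    rw [Set.ncard_univ, Nat.card_fun, Nat.card_fin] at hle
    exact (Nat.mul_le_mul_right _ hle).trans_eq (pow_succ _ _).symm

section Reachability

variable [Finite V] [Finite Λ] [Nonempty Λ] [Finite ι]

theorem prob_exists_isPath_le {u w : V} (huw : u ≠ w) (k : ℕ) :
    prob {φ : ι → Clause V Λ | ∃ (v : Fin (k + 1) ↪ V) (pos : Fin k ↪ ι),
      (v 0 = u ∧ v (Fin.last k) = w) ∧ IsPath v (φ ∘ pos)} ≤
      1 / Nat.card V * (2 * Nat.card ι / Nat.card V) ^ k := by
  classical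
  cases nonempty_fintype V
  cases nonempty_fintype ι
  have : Nonempty V := ⟨u⟩
  have hV : 0 < (Nat.card V : ℝ) := Nat.cast_pos.2 Nat.card_pos
  let ends : Set (Fin (k + 1) ↪ V) := {v | v 0 = u ∧ v (Fin.last k) = w}
  have hends : (ends.ncard : ℝ) ≤ (Nat.card V : ℝ) ^ k / Nat.card V := by
    rw [le_div_iff₀ hV]
    exact_mod_cast ncard_embedding_ends_mul_le huw k
  have hpos : (Nat.card (Fin k ↪ ι) : ℝ) ≤ (Nat.card ι : ℝ) ^ k := by
    rw [Nat.card_eq_fintype_card, Fintype.card_embedding_eq, Fintype.card_fin,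
      Nat.card_eq_fintype_card]
    exact_mod_cast Nat.descFactorial_le_pow _ _
  have hunion : {φ : ι → Clause V Λ | ∃ (v : Fin (k + 1) ↪ V) (pos : Fin k ↪ ι),
      (v 0 = u ∧ v (Fin.last k) = w) ∧ IsPath v (φ ∘ pos)} =
      ⋃ s : ends × (Fin k ↪ ι), {φ | φ ∘ s.2 ∈ {ψ | IsPath s.1 ψ}} := by
    ext φ
    simp [ends]
  calc _ ≤ ∑ s : ends × (Fin k ↪ ι), (2 / (Nat.card V : ℝ) ^ 2) ^ k := by
        rw [hunion]
        refine (prob_iUnion_le _).trans_eq (Finset.sum_congr rfl fun s _ => ?_)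
        rw [prob_comp_embedding, prob_isPath]
    _ = ends.ncard * Nat.card (Fin k ↪ ι) * (2 / (Nat.card V : ℝ) ^ 2) ^ k := by
        rw [Finset.sum_const, Finset.card_univ, ← Nat.card_eq_fintype_card, Nat.card_prod,
          nsmul_eq_mul, Nat.cast_mul, Nat.card_coe_set_eq]
    _ ≤ (Nat.card V : ℝ) ^ k / Nat.card V * (Nat.card ι : ℝ) ^ k *
          (2 / (Nat.card V : ℝ) ^ 2) ^ k := by gcongr
    _ = 1 / Nat.card V * (2 * Nat.card ι / Nat.card V) ^ k := by
        rw [div_mul_eq_mul_div, div_mul_eq_mul_div, ← mul_pow, ← mul_pow, one_div_mul_eq_div]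
        congr 2
        have := hV.ne'
        field_simp

theorem prob_reachable_le {u w : V} (huw : u ≠ w) (h : 2 * Nat.card ι < Nat.card V) :
    prob {φ : ι → Clause V Λ | (constraintGraph φ).Reachable u w} ≤
      1 / (Nat.card V - 2 * Nat.card ι) := by
  have h' : 2 * (Nat.card ι : ℝ) < Nat.card V := mod_cast h
  have hV : 0 < (Nat.card V : ℝ) := h'.trans_le' (by positivity)
  have hratio : 2 * (Nat.card ι : ℝ) / Nat.card V < 1 := (div_lt_one hV).2 h'
  have hsubset : {φ : ι → Clause V Λ | (constraintGraph φ).Reachable u w} ⊆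
      ⋃ k : Fin (Nat.card V), {φ | ∃ (v : Fin (k + 1) ↪ V) (pos : Fin k ↪ ι),
        (v 0 = u ∧ v (Fin.last k) = w) ∧ IsPath v (φ ∘ pos)} := fun φ hφ => by
    obtain ⟨k, v, pos, h0, hlast, hpath⟩ := exists_isPath_of_reachable hφ
    exact Set.mem_iUnion.2 ⟨⟨k, lt_card_of_embedding v⟩, v, pos, ⟨h0, hlast⟩, hpath⟩
  calc _ ≤ ∑ k : Fin (Nat.card V),
        1 / Nat.card V * (2 * (Nat.card ι : ℝ) / Nat.card V) ^ (k : ℕ) :=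
        (prob_mono hsubset).trans ((prob_iUnion_le _).trans
          (Finset.sum_le_sum fun k _ => prob_exists_isPath_le huw k))
    _ ≤ 1 / Nat.card V * (1 - 2 * (Nat.card ι : ℝ) / Nat.card V)⁻¹ := by
        rw [← Finset.mul_sum, ← tsum_geometric_of_lt_one (by positivity) hratio,
          Fin.sum_univ_eq_sum_range fun k => (2 * (Nat.card ι : ℝ) / Nat.card V) ^ k]
        gcongr
        exact (summable_geometric_of_lt_one (by positivity) hratio).sum_le_tsum _
          fun _ _ => by positivity
    _ = 1 / (Nat.card V - 2 * Nat.card ι) := by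
        have : (Nat.card V : ℝ) - 2 * Nat.card ι ≠ 0 := (sub_pos.2 h').ne'
        field_simp

theorem prob_not_isSeparated_le {k : ℕ} (v : Fin (k + 1) ↪ V) {m : ℕ} (hι : Nat.card ι ≤ m)
    (h : 2 * m < Nat.card V) :
    prob {φ : ι → Clause V Λ | ¬ IsSeparated v φ} ≤ (k + 1) ^ 2 / (Nat.card V - 2 * m) := by
  have h' : 2 * (m : ℝ) < Nat.card V := mod_cast h
  have hι' : (Nat.card ι : ℝ) ≤ m := mod_cast hι
  have hsubset : {φ : ι → Clause V Λ | ¬ IsSeparated v φ} ⊆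
      ⋃ p : Fin (k + 1) × Fin (k + 1), {φ | p.1 ≠ p.2 ∧
        (constraintGraph φ).Reachable (v p.1) (v p.2)} := fun φ hφ => by
    simpa [IsSeparated, Pairwise] using hφ
  have hpair (p : Fin (k + 1) × Fin (k + 1)) : prob {φ : ι → Clause V Λ | p.1 ≠ p.2 ∧
      (constraintGraph φ).Reachable (v p.1) (v p.2)} ≤ 1 / (Nat.card V - 2 * m) := by
    by_cases hp : p.1 = p.2
    · simp only [hp, ne_eq, not_true_eq_false, false_and, Set.ofPred_false, prob_empty]
      exact (div_pos one_pos (sub_pos.2 h')).le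
    · refine (prob_mono fun φ hφ => hφ.2).trans
        ((prob_reachable_le (v.injective.ne hp) (by omega)).trans ?_)
      have := sub_pos.2 h'
      gcongr
  refine (prob_mono hsubset).trans ((prob_iUnion_le _).trans
    ((Finset.sum_le_sum fun p _ => hpair p).trans_eq ?_))
  rw [Finset.sum_const, Finset.card_univ, Fintype.card_prod, Fintype.card_fin, nsmul_eq_mul]
  push_cast
  ring

end Reachability

section Recurrence

/-- A candidate for a path in a formula indexed by `ι`: the number `k` of its clauses, its `k + 1`
distinct vertices and its `k` distinct clause positions. Bounding `k` makes the type finite. -/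
abbrev PathSlot (V ι : Type*) : Type _ :=
  Σ k : Fin (Nat.card V), (Fin (k + 1) ↪ V) × (Fin k ↪ ι)

/-- `n` times the expected number of paths with `k` clauses, in a uniform formula with `m` clauses
on `n` variables, which a further uniform clause closes to a cycle. -/
def closingRate (n m k : ℕ) : ℝ :=
  n.descFactorial (k + 1) * m.descFactorial k * 2 ^ k / n ^ (2 * k + 1)

theorem card_mul_sum_pathSlot [Fintype V] [Nonempty V] (m : ℕ) (f : ℕ → ℝ) :
    Nat.card V * ∑ s : PathSlot V (Fin m),
      1 / (Nat.card V : ℝ) ^ 2 * (2 / (Nat.card V : ℝ) ^ 2) ^ (s.1 : ℕ) * f s.1 =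
      ∑ k ∈ Finset.range (Nat.card V), closingRate (Nat.card V) m k * f k := by
  have hV : (Nat.card V : ℝ) ≠ 0 := Nat.cast_ne_zero.2 Nat.card_pos.ne'
  have hslots (k : ℕ) : Nat.card V * (Fintype.card ((Fin (k + 1) ↪ V) × (Fin k ↪ Fin m)) *
      (1 / (Nat.card V : ℝ) ^ 2 * (2 / (Nat.card V : ℝ) ^ 2) ^ k * f k)) =
      closingRate (Nat.card V) m k * f k := by
    rw [Fintype.card_prod, Fintype.card_embedding_eq, Fintype.card_embedding_eq, Fintype.card_fin,
      Fintype.card_fin, Fintype.card_fin, ← Nat.card_eq_fintype_card, closingRate, Nat.cast_mul,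
      pow_succ _ (2 * k), pow_mul _ 2 k, div_pow]
    field_simp
  rw [Fintype.sum_sigma, Finset.mul_sum, ← Fin.sum_univ_eq_sum_range]
  refine Finset.sum_congr rfl fun k _ => ?_
  rw [← hslots k, ← nsmul_eq_mul (Fintype.card _), ← Finset.card_univ, ← Finset.sum_const]

theorem satProb_sub_succ [Add G] [Finite V] [Nonempty V] [Finite Λ] [Nonempty Λ] (l : Λ → G)
    (m : ℕ) :
    satProb V l m - satProb V l (m + 1) = prob {x : Clause V Λ × (Fin m → Clause V Λ) |
      IsSatisfiable l x.2 ∧ Contradicts l x.1 x.2} := by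
  let sat : Set (Clause V Λ × (Fin m → Clause V Λ)) := {x | IsSatisfiable l x.2}
  let satSucc : Set (Clause V Λ × (Fin m → Clause V Λ)) :=
    {x | IsSatisfiable l (Fin.cons x.1 x.2 : Fin (m + 1) → Clause V Λ)}
  have hsub : satSucc ⊆ sat := fun x hx => (isSatisfiable_cons_iff.1 hx).1
  have hsat : satProb V l m = prob sat := by
    rw [satProb, ← one_mul (prob _), ← prob_univ (Ω := Clause V Λ), ← prob_prod, Set.univ_prod]
    rfl
  have hsucc : satProb V l (m + 1) = prob satSucc :=
    (prob_preimage_equiv (Fin.consEquiv fun _ => Clause V Λ) _).symm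
  rw [hsat, hsucc, ← prob_sdiff hsub]
  congr 1
  ext x
  simp only [sat, satSucc, Set.mem_sdiff, Set.mem_ofPred_eq, isSatisfiable_cons_iff]
  tauto

theorem satProb_antitone [Add G] [Finite V] [Nonempty V] [Finite Λ] [Nonempty Λ] (l : Λ → G) :
    Antitone (satProb V l) :=
  antitone_nat_of_succ_le fun m =>
    sub_nonneg.1 ((satProb_sub_succ (V := V) l m).symm ▸ prob_nonneg _)

theorem natCard_compl_range_embedding {m k : ℕ} (pos : Fin k ↪ Fin m) :
    Nat.card ↥(Set.range pos)ᶜ = m - k := by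
  rw [Nat.card_coe_set_eq, Set.ncard_compl, Set.ncard_range_of_injective pos.injective,
    Nat.card_fin, Nat.card_fin]

theorem prob_isContradictoryCycle_inter_remaining [AddCommMonoid G] (l : Λ → G) {m k : ℕ}
    (v : Fin (k + 1) ↪ V) (pos : Fin k ↪ Fin m) (B : Set (↥(Set.range pos)ᶜ → Clause V Λ)) :
    prob {x : Clause V Λ × (Fin m → Clause V Λ) |
      IsContradictoryCycle l v x.1 (x.2 ∘ pos) ∧ remaining pos x.2 ∈ B} =
      1 / (Nat.card V : ℝ) ^ 2 * (2 / (Nat.card V : ℝ) ^ 2) ^ k *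
        (nonzeroSumProb l (k + 1) * prob B) := by
  rw [← mul_assoc, ← prob_isContradictoryCycle l v, ← prob_remaining_inter pos]
  rfl

theorem pairwise_disjoint_separated_cycle [AddCommMonoid G] (l : Λ → G) (m : ℕ) :
    Pairwise (Function.onFun Disjoint fun s : PathSlot V (Fin m) =>
      {x : Clause V Λ × (Fin m → Clause V Λ) | IsContradictoryCycle l s.2.1 x.1 (x.2 ∘ s.2.2) ∧
        remaining s.2.2 x.2 ∈ {χ | IsSatisfiable l χ} ∩ {χ | IsSeparated s.2.1 χ}}) := by
  rintro ⟨⟨k, hk⟩, v, pos⟩ ⟨⟨k', hk'⟩, v', pos'⟩ hne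
  refine Set.disjoint_left.2 fun x ⟨hcycle, _, hsep⟩ ⟨hcycle', _, hsep'⟩ => hne ?_
  cases hcycle.isPath.unique_of_isSeparated hsep hcycle'.isPath hsep'
    (hcycle'.fst_eq.symm.trans hcycle.fst_eq) (hcycle'.snd_eq.symm.trans hcycle.snd_eq)
  rfl

variable [Finite V] [Nonempty V] [Finite Λ] [Nonempty Λ] [AddCommGroup G] [Module (ZMod 2) G]

theorem card_mul_satProb_sub_succ_le (l : Λ → G) (m : ℕ) :
    Nat.card V * (satProb V l m - satProb V l (m + 1)) ≤
      ∑ k ∈ Finset.range (Nat.card V),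
        closingRate (Nat.card V) m k * (nonzeroSumProb l (k + 1) * satProb V l (m - k)) := by
  cases nonempty_fintype V
  have hsubset : {x : Clause V Λ × (Fin m → Clause V Λ) |
      IsSatisfiable l x.2 ∧ Contradicts l x.1 x.2} ⊆
      ⋃ s : PathSlot V (Fin m), {x | IsContradictoryCycle l s.2.1 x.1 (x.2 ∘ s.2.2) ∧
        remaining s.2.2 x.2 ∈ {χ | IsSatisfiable l χ}} := fun x ⟨hsat, hcontra⟩ => by
    obtain ⟨k, v, pos, hcycle⟩ := hsat.exists_isContradictoryCycle hcontra
    exact Set.mem_iUnion.2 ⟨⟨⟨k, lt_card_of_embedding v⟩, v, pos⟩, hcycle, hsat.remaining pos⟩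
  rw [satProb_sub_succ,
    ← card_mul_sum_pathSlot m fun k => nonzeroSumProb l (k + 1) * satProb V l (m - k)]
  refine mul_le_mul_of_nonneg_left ((prob_mono hsubset).trans ((prob_iUnion_le _).trans_eq
    (Finset.sum_congr rfl fun s _ => ?_))) (Nat.cast_nonneg _)
  rw [prob_isContradictoryCycle_inter_remaining, prob_isSatisfiable, natCard_compl_range_embedding]

theorem le_card_mul_satProb_sub_succ (l : Λ → G) {m : ℕ} (hm : 2 * m < Nat.card V) :
    ∑ k ∈ Finset.range (Nat.card V), closingRate (Nat.card V) m k * (nonzeroSumProb l (k + 1) *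
      (satProb V l (m - k) - (k + 1) ^ 2 / (Nat.card V - 2 * m))) ≤
      Nat.card V * (satProb V l m - satProb V l (m + 1)) := by
  cases nonempty_fintype V
  have hsubset : ⋃ s : PathSlot V (Fin m), {x : Clause V Λ × (Fin m → Clause V Λ) |
      IsContradictoryCycle l s.2.1 x.1 (x.2 ∘ s.2.2) ∧
        remaining s.2.2 x.2 ∈ {χ | IsSatisfiable l χ} ∩ {χ | IsSeparated s.2.1 χ}} ⊆
      {x | IsSatisfiable l x.2 ∧ Contradicts l x.1 x.2} :=
    Set.iUnion_subset fun s x ⟨hcycle, hsat, hsep⟩ =>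
      ⟨hcycle.isPath.isSatisfiable_of_isSeparated hsat hsep, hcycle.contradicts⟩
  rw [satProb_sub_succ, ← card_mul_sum_pathSlot m fun k =>
    nonzeroSumProb l (k + 1) * (satProb V l (m - k) - (k + 1) ^ 2 / (Nat.card V - 2 * m))]
  refine mul_le_mul_of_nonneg_left ((Finset.sum_le_sum fun s _ => ?_).trans ((prob_iUnion
    (pairwise_disjoint_separated_cycle l m)).symm.trans_le (prob_mono hsubset)))
    (Nat.cast_nonneg _)
  rw [prob_isContradictoryCycle_inter_remaining]
  have hseparated := prob_not_isSeparated_le (Λ := Λ) s.2.1 (ι := ↥(Set.range s.2.2)ᶜ)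
    (natCard_compl_range_embedding s.2.2 ▸ Nat.sub_le m s.1) hm
  have hsat : satProb V l (m - s.1) =
      prob {χ : ↥(Set.range s.2.2)ᶜ → Clause V Λ | IsSatisfiable l χ} := by
    rw [prob_isSatisfiable, natCard_compl_range_embedding]
  refine mul_le_mul_of_nonneg_left (mul_le_mul_of_nonneg_left ?_ (prob_nonneg _)) (by positivity)
  rw [hsat]
  exact (sub_le_sub_left hseparated _).trans (prob_sub_prob_compl_le _ _)

end Recurrence

end RandomFormulas

section ClosingRate

variable {n m k : ℕ}

theorem closingRate_nonneg : 0 ≤ closingRate n m k := by unfold closingRate; positivity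

theorem closingRate_zero (hn : n ≠ 0) : closingRate n m 0 = 1 := by
  simp [closingRate, hn]

theorem closingRate_eq_zero_of_le (h : n ≤ k) : closingRate n m k = 0 := by
  rw [closingRate, Nat.descFactorial_of_lt (Nat.lt_succ_of_le h), Nat.cast_zero, zero_mul, zero_mul,
    zero_div]

/-- The factor by which `closingRate n m` grows from `k` to `k + 1`. -/
def closingFactor (n m k : ℕ) : ℝ := (n - (k + 1) : ℕ) / n * (2 * (m - k : ℕ) / n)

theorem closingRate_succ : closingRate n m (k + 1) = closingRate n m k * closingFactor n m k := by
  rw [closingRate, closingRate, closingFactor, Nat.descFactorial_succ n, Nat.descFactorial_succ m,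
    Nat.cast_mul, Nat.cast_mul, mul_add_one 2 k, pow_succ _ (2 * k + 2), pow_succ _ (2 * k + 1)]
  ring

theorem closingFactor_nonneg : 0 ≤ closingFactor n m k := by unfold closingFactor; positivity

theorem sub_div_le_cast_tsub_div (a b n : ℕ) : ((a : ℝ) - b) / n ≤ ((a - b : ℕ) : ℝ) / n := by
  gcongr
  exact sub_le_iff_le_add.2 (mod_cast le_tsub_add)

theorem closingFactor_le : closingFactor n m k ≤ 2 * m / n := by
  rw [closingFactor, mul_div_assoc, mul_div_assoc, ← one_mul (2 * ((m : ℝ) / n))]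
  exact mul_le_mul (div_le_one_of_le₀ (Nat.cast_le.2 (Nat.sub_le _ _)) (Nat.cast_nonneg _))
    (by gcongr; exact Nat.sub_le m k) (by positivity) zero_le_one

theorem sub_closingFactor_le (hn : n ≠ 0) (hm : 2 * (m : ℝ) / n ≤ 1) :
    2 * (m : ℝ) / n - closingFactor n m k ≤ (3 * k + 1) / n := by
  have hn' : (n : ℝ) ≠ 0 := Nat.cast_ne_zero.2 hn
  have hfst : 1 - ((n - (k + 1) : ℕ) : ℝ) / n ≤ (k + 1) / n := by
    have := sub_div_le_cast_tsub_div n (k + 1) n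
    rw [sub_div, div_self hn'] at this
    push_cast at this
    linarith
  have hsnd : 2 * (m : ℝ) / n - 2 * (m - k : ℕ) / n ≤ 2 * k / n := by
    have := sub_div_le_cast_tsub_div m k n
    rw [sub_div] at this
    simp only [mul_div_assoc]
    linarith
  have hsnd1 : 2 * ((m - k : ℕ) : ℝ) / n ≤ 1 :=
    le_trans (by gcongr; exact Nat.sub_le m k) hm
  calc 2 * (m : ℝ) / n - closingFactor n m k
      = (2 * (m : ℝ) / n - 2 * (m - k : ℕ) / n) +
        (1 - ((n - (k + 1) : ℕ) : ℝ) / n) * (2 * (m - k : ℕ) / n) := by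
        rw [closingFactor]; ring
    _ ≤ 2 * k / n + (k + 1) / n * 1 := by gcongr
    _ = (3 * k + 1) / n := by ring

theorem closingRate_le_pow (hn : n ≠ 0) : closingRate n m k ≤ (2 * (m : ℝ) / n) ^ k := by
  induction k with
  | zero => exact (closingRate_zero hn).le
  | succ k ih =>
    rw [closingRate_succ, pow_succ]
    exact mul_le_mul ih closingFactor_le closingFactor_nonneg (by positivity)

theorem pow_sub_closingRate_le (hn : n ≠ 0) {τ : ℝ} (hτ : τ ≤ 1) (hm : 2 * (m : ℝ) / n ≤ τ) :
    τ * ((2 * (m : ℝ) / n) ^ k - closingRate n m k) ≤ 2 * k ^ 2 * τ ^ k / n := by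
  induction k with
  | zero => simp [closingRate_zero hn]
  | succ k ih =>
    have ht0 : 0 ≤ 2 * (m : ℝ) / n := by positivity
    have hτ0 : 0 ≤ τ := ht0.trans hm
    set t := 2 * (m : ℝ) / n
    have hstep : τ * (t ^ k * (t - closingFactor n m k)) ≤ τ * (τ ^ k * ((3 * k + 1) / n)) := by
      gcongr
      · exact sub_nonneg.2 closingFactor_le
      · exact sub_closingFactor_le hn (hm.trans hτ)
    have hprev : closingFactor n m k * (τ * (t ^ k - closingRate n m k)) ≤
        τ * (2 * k ^ 2 * τ ^ k / n) :=
      mul_le_mul (closingFactor_le.trans hm) ih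
        (mul_nonneg hτ0 (sub_nonneg.2 (closingRate_le_pow hn))) hτ0
    calc τ * (t ^ (k + 1) - closingRate n m (k + 1))
        = τ * (t ^ k * (t - closingFactor n m k)) +
          closingFactor n m k * (τ * (t ^ k - closingRate n m k)) := by
          rw [closingRate_succ]; ring
      _ ≤ τ * (τ ^ k * ((3 * k + 1) / n)) + τ * (2 * k ^ 2 * τ ^ k / n) := add_le_add hstep hprev
      _ = (2 * k ^ 2 + 3 * k + 1) * τ ^ (k + 1) / n := by ring
      _ ≤ 2 * (k + 1 : ℕ) ^ 2 * τ ^ (k + 1) / n := by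
          gcongr
          push_cast
          nlinarith [(Nat.cast_nonneg k : (0 : ℝ) ≤ k)]

end ClosingRate

section StepEstimate

variable {Λ G : Type*} {n m k : ℕ} {τ : ℝ}

theorem hasSum_closingRate_mul (f : ℕ → ℝ) : HasSum (fun k => closingRate n m k * f k)
    (∑ k ∈ Finset.range n, closingRate n m k * f k) :=
  hasSum_sum_of_ne_finset_zero fun k hk => by
    rw [closingRate_eq_zero_of_le (not_lt.1 (mt Finset.mem_range.2 hk)), zero_mul]

theorem sum_closingRate_mul_le (hn : n ≠ 0) (hτ : τ < 1) (hm : 2 * (m : ℝ) / n ≤ τ) {f : ℕ → ℝ}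
    (hf : ∀ k, f k ≤ 1) : ∑ k ∈ Finset.range n, closingRate n m k * f k ≤ (1 - τ)⁻¹ := by
  have hτ0 : 0 ≤ τ := le_trans (by positivity) hm
  refine hasSum_le (fun k => ?_) (hasSum_closingRate_mul f) (hasSum_geometric_of_lt_one hτ0 hτ)
  calc closingRate n m k * f k ≤ closingRate n m k :=
        mul_le_of_le_one_right closingRate_nonneg (hf k)
    _ ≤ τ ^ k := (closingRate_le_pow hn).trans (by gcongr)

theorem tsub_le_add_mul_of_sub_succ_le {p : ℕ → ℝ} {δ : ℝ} (hδ : 0 ≤ δ)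
    (h : ∀ j < m, p j - p (j + 1) ≤ δ) (k : ℕ) : p (m - k) ≤ p m + k * δ := by
  induction k with
  | zero => simp
  | succ k ih =>
    rcases lt_or_ge k m with hk | hk
    · have hlast := h (m - (k + 1)) (by omega)
      rw [show m - (k + 1) + 1 = m - k by omega] at hlast
      push_cast
      linarith
    · rw [Nat.sub_eq_zero_of_le hk] at ih
      rw [Nat.sub_eq_zero_of_le (hk.trans k.le_succ)]
      push_cast
      linarith

theorem pow_sub_closingRate_le_of_pos (hn : n ≠ 0) (hτ0 : 0 < τ) (hτ : τ < 1)
    (hm : 2 * (m : ℝ) / n ≤ τ) :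
    (2 * (m : ℝ) / n) ^ k - closingRate n m k ≤ 2 / τ / n * ((k + 1) ^ 2 * τ ^ k) := by
  have hdefect := (le_div_iff₀' hτ0).2 (pow_sub_closingRate_le (k := k) hn hτ.le hm)
  calc _ ≤ 2 * (k : ℝ) ^ 2 * τ ^ k / n / τ := hdefect
    _ ≤ 2 * (k + 1) ^ 2 * τ ^ k / n / τ := by gcongr; exact (lt_add_one _).le
    _ = 2 / τ / n * ((k + 1) ^ 2 * τ ^ k) := by ring

variable [Finite Λ] [Nonempty Λ]

theorem le_closingRate_mul_satProb [Add G] (l : Λ → G) (hn : n ≠ 0) (hτ0 : 0 < τ) (hτ : τ < 1)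
    (hm : 2 * (m : ℝ) / n ≤ τ) {w : ℝ} (hw : w ∈ Set.Icc 0 1) :
    w * (2 * (m : ℝ) / n) ^ k * satProb (Fin n) l m -
        (2 / τ + (1 - τ)⁻¹) / n * ((k + 1) ^ 2 * τ ^ k) ≤
      closingRate n m k * (w * (satProb (Fin n) l (m - k) - (k + 1) ^ 2 / (n - 2 * m))) := by
  have : NeZero n := ⟨hn⟩
  have hn' : 0 < (n : ℝ) := Nat.cast_pos.2 (Nat.pos_of_ne_zero hn)
  have hτ' : 0 < 1 - τ := sub_pos.2 hτ
  have hgap : (1 - τ) * n ≤ n - 2 * m := by linarith [(div_le_iff₀ hn').1 hm]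
  have hdefect := pow_sub_closingRate_le_of_pos (k := k) hn hτ0 hτ hm
  have hrate_le := closingRate_le_pow (m := m) (k := k) hn
  have hrate : closingRate n m k ≤ τ ^ k := hrate_le.trans (by gcongr)
  have hrate0 : 0 ≤ closingRate n m k := closingRate_nonneg
  have hmono := satProb_antitone (V := Fin n) l (Nat.sub_le m k)
  set p := satProb (Fin n) l m
  set t := 2 * (m : ℝ) / n
  have hp0 : 0 ≤ p := prob_nonneg _
  have hp1 : p ≤ 1 := prob_le_one _
  have hsep : ((k : ℝ) + 1) ^ 2 / (n - 2 * m) ≤ (1 - τ)⁻¹ / n * (k + 1) ^ 2 := by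
    rw [div_eq_inv_mul, ← one_div (1 - τ), div_div, one_div]
    gcongr
  have herror : w * p * (t ^ k - closingRate n m k) +
      w * (closingRate n m k * ((1 - τ)⁻¹ / n * (k + 1) ^ 2)) ≤
      2 / τ / n * ((k + 1) ^ 2 * τ ^ k) + τ ^ k * ((1 - τ)⁻¹ / n * (k + 1) ^ 2) := by
    have hδ : 0 ≤ (1 - τ)⁻¹ / n * ((k : ℝ) + 1) ^ 2 := by positivity
    refine add_le_add ((mul_le_of_le_one_left (sub_nonneg.2 hrate_le)
      (mul_le_one₀ hw.2 hp0 hp1)).trans hdefect) ?_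
    exact (mul_le_of_le_one_left (mul_nonneg hrate0 hδ) hw.2).trans (by gcongr)
  calc _ ≤ w * t ^ k * p - (w * p * (t ^ k - closingRate n m k) +
          w * (closingRate n m k * ((1 - τ)⁻¹ / n * (k + 1) ^ 2))) := by
        refine sub_le_sub_left (herror.trans_eq ?_) _
        ring
    _ = closingRate n m k * (w * (p - (1 - τ)⁻¹ / n * (k + 1) ^ 2)) := by ring
    _ ≤ _ := by
        gcongr
        exact hw.1

theorem nonzeroSumProb_mem_Icc [AddCommMonoid G] (l : Λ → G) (k : ℕ) :
    nonzeroSumProb l k ∈ Set.Icc 0 1 :=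
  ⟨prob_nonneg _, prob_le_one _⟩

theorem summable_add_one_sq_mul_geometric (hτ0 : 0 ≤ τ) (hτ : τ < 1) :
    Summable fun k : ℕ => ((k : ℝ) + 1) ^ 2 * τ ^ k := by
  have hnorm : ‖τ‖ < 1 := by rwa [Real.norm_of_nonneg hτ0]
  have h (j : ℕ) := summable_pow_mul_geometric_of_norm_lt_one j hnorm
  refine (((h 2).add ((h 1).mul_left 2)).add (h 0)).congr fun k => ?_
  ring

variable [AddCommGroup G] [Module (ZMod 2) G] (l : Λ → G)

theorem satProb_sub_succ_le (hn : n ≠ 0) (hτ : τ < 1) (hm : 2 * (m : ℝ) / n ≤ τ) :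
    satProb (Fin n) l m - satProb (Fin n) l (m + 1) ≤ (1 - τ)⁻¹ / n := by
  have : NeZero n := ⟨hn⟩
  rw [le_div_iff₀' (Nat.cast_pos.2 (Nat.pos_of_ne_zero hn))]
  have hupper := card_mul_satProb_sub_succ_le (V := Fin n) l m
  rw [Nat.card_fin] at hupper
  exact hupper.trans (sum_closingRate_mul_le hn hτ hm fun k =>
    mul_le_one₀ (prob_le_one _) (prob_nonneg _) (prob_le_one _))

theorem satProb_tsub_le (hn : n ≠ 0) (hτ : τ < 1) (hm : 2 * (m : ℝ) / n ≤ τ) (k : ℕ) :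
    satProb (Fin n) l (m - k) ≤ satProb (Fin n) l m + k * ((1 - τ)⁻¹ / n) := by
  refine tsub_le_add_mul_of_sub_succ_le
    (div_nonneg (inv_nonneg.2 (sub_nonneg.2 hτ.le)) (Nat.cast_nonneg n)) (fun j hj => ?_) k
  exact satProb_sub_succ_le l hn hτ (le_trans (by gcongr) hm)

theorem closingRate_mul_satProb_le (hn : n ≠ 0) (hτ : τ < 1) (hm : 2 * (m : ℝ) / n ≤ τ) {w : ℝ}
    (hw : w ∈ Set.Icc 0 1) :
    closingRate n m k * (w * satProb (Fin n) l (m - k)) ≤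
      w * (2 * (m : ℝ) / n) ^ k * satProb (Fin n) l m +
        (1 - τ)⁻¹ / n * ((k + 1) ^ 2 * τ ^ k) := by
  have hτ0 : 0 ≤ τ := le_trans (by positivity) hm
  have hδ : 0 ≤ (1 - τ)⁻¹ / n := div_nonneg (inv_nonneg.2 (sub_nonneg.2 hτ.le)) (Nat.cast_nonneg n)
  set p := satProb (Fin n) l m
  have hp : 0 ≤ p := prob_nonneg _
  calc closingRate n m k * (w * satProb (Fin n) l (m - k))
      ≤ closingRate n m k * (w * (p + k * ((1 - τ)⁻¹ / n))) := by
        gcongr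
        exacts [closingRate_nonneg, hw.1, satProb_tsub_le l hn hτ hm k]
    _ = w * closingRate n m k * p + (1 - τ)⁻¹ / n * (k * (w * closingRate n m k)) := by ring
    _ ≤ w * (2 * (m : ℝ) / n) ^ k * p + (1 - τ)⁻¹ / n * ((k + 1) ^ 2 * (1 * τ ^ k)) := by
        have hrate : closingRate n m k ≤ (2 * (m : ℝ) / n) ^ k := closingRate_le_pow hn
        have hk : (k : ℝ) ≤ (k + 1) ^ 2 := by nlinarith [(Nat.cast_nonneg k : (0 : ℝ) ≤ k)]
        have hrate0 : 0 ≤ closingRate n m k := closingRate_nonneg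
        gcongr
        exacts [hw.1, mul_nonneg hw.1 hrate0, hw.2, hrate.trans (by gcongr)]
    _ = _ := by rw [one_mul]

theorem exists_abs_satProb_sub_succ_sub_le (hτ0 : 0 < τ) (hτ : τ < 1) :
    ∃ C, ∀ (n m : ℕ) (F : ℝ), n ≠ 0 → 2 * (m : ℝ) / n ≤ τ →
      HasSum (fun k => nonzeroSumProb l (k + 1) * (2 * (m : ℝ) / n) ^ k) F →
      |n * (satProb (Fin n) l m - satProb (Fin n) l (m + 1)) - F * satProb (Fin n) l m| ≤
        C / n := by
  obtain ⟨S, hS⟩ := summable_add_one_sq_mul_geometric hτ0.le hτ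
  refine ⟨(2 / τ + (1 - τ)⁻¹) * S, fun n m F hn hm hF => ?_⟩
  have : NeZero n := ⟨hn⟩
  have hn' : 0 < (n : ℝ) := Nat.cast_pos.2 (Nat.pos_of_ne_zero hn)
  have hw (k : ℕ) := nonzeroSumProb_mem_Icc l (k + 1)
  have hlower := le_card_mul_satProb_sub_succ (V := Fin n) l (m := m) (by
    rw [Nat.card_fin]
    exact_mod_cast (div_lt_one hn').1 (hm.trans_lt hτ))
  have hupper := card_mul_satProb_sub_succ_le (V := Fin n) l m
  rw [Nat.card_fin] at hlower hupper
  have hlower' := hasSum_le (fun k => le_closingRate_mul_satProb l hn hτ0 hτ hm (hw k))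
    ((hF.mul_right _).sub (hS.mul_left _)) (hasSum_closingRate_mul _)
  have hupper' := hasSum_le (fun k => closingRate_mul_satProb_le l hn hτ hm (hw k))
    (hasSum_closingRate_mul _) ((hF.mul_right _).add (hS.mul_left _))
  have hS0 : 0 ≤ 2 / τ / n * S :=
    mul_nonneg (by positivity) (hS.nonneg fun k => by positivity)
  rw [abs_le, mul_div_right_comm]
  constructor
  · linarith
  · rw [add_div, add_mul]
    linarith

end StepEstimate

section Comparison

theorem abs_sub_sub_mul_le_of_lipschitzOnWith {f f' : ℝ → ℝ} {s : Set ℝ} {K : NNReal}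
    (hs : Convex ℝ s) (hf : ∀ x ∈ s, HasDerivWithinAt f (f' x) s x) (hf' : LipschitzOnWith K f' s)
    {x y : ℝ} (hx : x ∈ s) (hy : y ∈ s) : |f y - f x - f' x * (y - x)| ≤ K * (y - x) ^ 2 := by
  have hseg : segment ℝ x y ⊆ s := hs.segment_subset hx hy
  have hderiv (z) (hz : z ∈ segment ℝ x y) : HasDerivWithinAt (fun z => f z - f' x * z)
      (f' z - f' x) (segment ℝ x y) z := by
    simpa only [mul_one, id] using
      ((hf z (hseg hz)).mono hseg).fun_sub ((hasDerivWithinAt_id z _).const_mul (f' x))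
  have hbound (z) (hz : z ∈ segment ℝ x y) : ‖f' z - f' x‖ ≤ K * |y - x| := by
    refine (hf'.norm_sub_le (hseg hz) hx).trans ?_
    gcongr
    rw [segment_eq_uIcc] at hz
    exact Set.abs_sub_left_of_mem_uIcc hz
  have hmvt := (convex_segment x y).norm_image_sub_le_of_norm_hasDerivWithin_le hderiv hbound
    (left_mem_segment ℝ x y) (right_mem_segment ℝ x y)
  rw [mul_assoc, Real.norm_eq_abs, Real.norm_eq_abs, abs_mul_abs_self, ← sq] at hmvt
  convert hmvt using 2
  ring

theorem abs_sub_le_of_recurrence {p q r : ℕ → ℝ} {δ ε : ℝ} {M : ℕ} (h0 : p 0 = q 0)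
    (hr : ∀ j < M, |r j| ≤ 1) (hp : ∀ j < M, |p (j + 1) - r j * p j| ≤ δ)
    (hq : ∀ j < M, |q (j + 1) - r j * q j| ≤ ε) : |p M - q M| ≤ M * (δ + ε) := by
  induction M with
  | zero => simp [h0]
  | succ M ih =>
    have hprev : |r M * (p M - q M)| ≤ M * (δ + ε) := by
      rw [abs_mul]
      exact (mul_le_of_le_one_left (abs_nonneg _) (hr M M.lt_succ_self)).trans
        (ih (fun j hj => hr j (hj.trans M.lt_succ_self))
          (fun j hj => hp j (hj.trans M.lt_succ_self)) fun j hj => hq j (hj.trans M.lt_succ_self))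
    have hp' := abs_le.1 (hp M M.lt_succ_self)
    have hq' := abs_le.1 (hq M M.lt_succ_self)
    have hprev' := abs_le.1 hprev
    push_cast
    exact abs_le.2 ⟨by linarith, by linarith⟩

theorem mem_Icc_of_hasSum_mul_pow {w : ℕ → ℝ} (hw : ∀ k, w k ∈ Set.Icc 0 1) {t τ F : ℝ}
    (ht : t ∈ Set.Icc 0 τ) (hτ : τ < 1) (hF : HasSum (fun k => w k * t ^ k) F) :
    F ∈ Set.Icc 0 (1 - τ)⁻¹ := by
  refine ⟨hF.nonneg fun k => mul_nonneg (hw k).1 (pow_nonneg ht.1 k),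
    hasSum_le (fun k => ?_) hF (hasSum_geometric_of_lt_one (ht.1.trans ht.2) hτ)⟩
  exact (mul_le_of_le_one_left (pow_nonneg ht.1 k) (hw k).2).trans (pow_le_pow_left₀ ht.1 ht.2 k)

theorem abs_sub_one_sub_div_mul_le {n a b F C : ℝ} (hn : 0 < n)
    (h : |n * (a - b) - F * a| ≤ C / n) : |b - (1 - F / n) * a| ≤ C / n ^ 2 := by
  have hscale : b - (1 - F / n) * a = -((n * (a - b) - F * a) / n) := by
    field_simp
    ring
  rw [hscale, abs_neg, abs_div, abs_of_pos hn, div_le_iff₀ hn]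
  exact h.trans_eq (by field_simp)

theorem abs_succ_sub_one_sub_div_mul_le {F L : ℝ → ℝ} {s : Set ℝ} {K : NNReal} (hs : Convex ℝ s)
    (hL : ∀ t ∈ s, HasDerivWithinAt L (-(F t * L t / 2)) s t)
    (hlip : LipschitzOnWith K (fun t => -(F t * L t / 2)) s) {n j : ℕ}
    (hj : 2 * (j : ℝ) / n ∈ s) (hj' : 2 * ((j + 1 : ℕ) : ℝ) / n ∈ s) :
    |L (2 * (j + 1 : ℕ) / n) - (1 - F (2 * j / n) / n) * L (2 * j / n)| ≤ 4 * K / n ^ 2 := by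
  have htaylor := abs_sub_sub_mul_le_of_lipschitzOnWith hs hL hlip hj hj'
  have hdiff : 2 * ((j + 1 : ℕ) : ℝ) / n - 2 * j / n = 2 / n := by push_cast; ring
  rw [hdiff] at htaylor
  convert htaylor using 1
  · congr 1; ring
  · ring

open Asymptotics Filter in
theorem satProb_sub_isBigO {Λ G : Type*} [Finite Λ] [Nonempty Λ] [AddCommGroup G]
    [Module (ZMod 2) G] (l : Λ → G) {τ : ℝ} (hτ0 : 0 < τ) (hτ : τ < 1) {F L : ℝ → ℝ} {K : NNReal}
    (hF : ∀ t ∈ Set.Icc 0 τ, HasSum (fun k => nonzeroSumProb l (k + 1) * t ^ k) (F t))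
    (hL0 : L 0 = 1) (hL : ∀ t ∈ Set.Icc 0 τ, HasDerivWithinAt L (-(F t * L t / 2)) (Set.Icc 0 τ) t)
    (hlip : LipschitzOnWith K (fun t => -(F t * L t / 2)) (Set.Icc 0 τ)) {m : ℕ → ℕ}
    (hm : ∀ᶠ n in atTop, 2 * (m n : ℝ) / n ≤ τ) :
    (fun n => satProb (Fin n) l (m n) - L (2 * (m n : ℝ) / n)) =O[atTop] fun n => (n : ℝ)⁻¹ := by
  obtain ⟨C, hC⟩ := exists_abs_satProb_sub_succ_sub_le l hτ0 hτ
  refine IsBigO.of_bound |C + 4 * K| ?_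
  filter_upwards [hm, eventually_gt_atTop 0, eventually_ge_atTop ⌈(1 - τ)⁻¹⌉₊] with n hmn hn hnτ
  have hn' : 0 < (n : ℝ) := Nat.cast_pos.2 hn
  have hmem {j : ℕ} (hj : j ≤ m n) : 2 * (j : ℝ) / n ∈ Set.Icc 0 τ :=
    ⟨by positivity, hmn.trans' (by gcongr)⟩
  have hle : (m n : ℝ) ≤ n := by
    linarith [(div_le_one hn').1 (hmn.trans hτ.le), (Nat.cast_nonneg (m n) : (0 : ℝ) ≤ m n)]
  have hfactor (j : ℕ) (hj : j < m n) : |1 - F (2 * j / n) / n| ≤ 1 := by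
    have hFj := mem_Icc_of_hasSum_mul_pow (fun k => nonzeroSumProb_mem_Icc l (k + 1))
      (hmem hj.le) hτ (hF _ (hmem hj.le))
    have hquot : F (2 * j / n) / n ≤ 1 := (div_le_one hn').2 (hFj.2.trans (Nat.ceil_le.1 hnτ))
    exact abs_le.2 ⟨by linarith, by linarith [div_nonneg hFj.1 hn'.le]⟩
  have hsat (j : ℕ) (hj : j < m n) : |satProb (Fin n) l (j + 1) -
      (1 - F (2 * j / n) / n) * satProb (Fin n) l j| ≤ C / n ^ 2 :=
    abs_sub_one_sub_div_mul_le hn' (hC n j _ hn.ne' (hmem hj.le).2 (hF _ (hmem hj.le)))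
  have hlimit (j : ℕ) (hj : j < m n) := abs_succ_sub_one_sub_div_mul_le (convex_Icc 0 τ) hL hlip
    (hmem hj.le) (hmem (Nat.succ_le_of_lt hj))
  have hcompare := abs_sub_le_of_recurrence (q := fun j => L (2 * (j : ℝ) / n))
    (by simp [satProb_zero, hL0]) hfactor hsat hlimit
  calc ‖satProb (Fin n) l (m n) - L (2 * (m n : ℝ) / n)‖
      ≤ m n * (C / n ^ 2 + 4 * K / n ^ 2) := hcompare
    _ ≤ m n * (|C + 4 * K| / n ^ 2) := by
        rw [← add_div]
        gcongr
        apply le_abs_self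
    _ ≤ n * (|C + 4 * K| / n ^ 2) := by gcongr
    _ = |C + 4 * K| * ‖(n : ℝ)⁻¹‖ := by
        rw [Real.norm_of_nonneg (by positivity)]
        field_simp

end Comparison

section SignCharacter

open scoped BigOperators

theorem addChar_map_sum {A M ι : Type*} [AddCommMonoid A] [CommMonoid M] (ψ : AddChar A M)
    (s : Finset ι) (f : ι → A) : ψ (∑ i ∈ s, f i) = ∏ i ∈ s, ψ (f i) :=
  (congrArg ψ.toMonoidHom (ofAdd_sum s f)).trans (map_prod ψ.toMonoidHom _ s)

/-- The nontrivial character of `ℤ/2`, with values `1` and `-1`. -/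
def signChar : AddChar (ZMod 2) ℝ := AddChar.zmodChar 2 (ζ := -1) (by norm_num)

theorem eq_zero_or_eq_one (b : ZMod 2) : b = 0 ∨ b = 1 := by decide +revert

theorem signChar_eq_ite (b : ZMod 2) : signChar b = if b = 0 then 1 else -1 := by
  obtain rfl | rfl := eq_zero_or_eq_one b
  · exact signChar.map_zero_eq_one
  · simp [signChar, AddChar.zmodChar_apply, ZMod.val_one]

theorem signChar_eq_one_iff {b : ZMod 2} : signChar b = 1 ↔ b = 0 := by
  rw [signChar_eq_ite, ite_eq_left_iff, ← not_imp_not]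
  norm_num

theorem expect_signChar : 𝔼 b, signChar b = 0 :=
  AddChar.expect_eq_zero_iff_ne_zero.2 <| AddChar.ne_zero_iff.2
    ⟨1, fun h => one_ne_zero (signChar_eq_one_iff.1 h)⟩

theorem expect_signChar_comp {A : Type*} [AddGroup A] [Fintype A] (f : A →+ ZMod 2)
    [Decidable (f = 0)] : 𝔼 a, signChar (f a) = if f = 0 then 1 else 0 := by
  classical
  have hzero : signChar.compAddMonoidHom f = 0 ↔ f = 0 := by
    simp only [DFunLike.ext_iff, AddChar.compAddMonoidHom_apply, AddChar.zero_apply,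
      signChar_eq_one_iff, AddMonoidHom.zero_apply]
  simpa only [hzero, AddChar.compAddMonoidHom_apply] using
    AddChar.expect_eq_ite (signChar.compAddMonoidHom f)

theorem prob_sum_eq_zero {A Λ : Type*} [AddGroup A] [Fintype A] [Fintype Λ]
    (f : Λ → A →+ ZMod 2) (k : ℕ) :
    prob {q : Fin k → Λ | ∑ j, f (q j) = 0} = 𝔼 a, (𝔼 y, signChar (f y a)) ^ k := by
  classical
  calc prob {q : Fin k → Λ | ∑ j, f (q j) = 0}
      = 𝔼 q : Fin k → Λ, 𝔼 a, signChar ((∑ j, f (q j)) a) := by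
        simp only [prob_eq_expect, expect_signChar_comp, Set.mem_ofPred_eq]
    _ = 𝔼 a, 𝔼 q : Fin k → Λ, ∏ j, signChar (f (q j) a) := by
        rw [Finset.expect_comm]
        simp only [AddMonoidHom.finsetSum_apply, addChar_map_sum]
    _ = 𝔼 a, (𝔼 y, signChar (f y a)) ^ k := by
        simp only [Finset.expect_pow, Fintype.piFinset_univ]

end SignCharacter

section Labels

open scoped BigOperators

variable {α β : ℕ}

/-- The right-hand side `Σ_k x (e k) + b` of a clause as a function of the universal assignment
`x`; the pair `(e, b)` is the label of the clause. -/
def rightSide (q : (Fin α → Fin β) × ZMod 2) (x : Fin β → ZMod 2) : ZMod 2 :=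
  ∑ k, x (q.1 k) + q.2

/-- The linear form `(x, s) ↦ Σ_k x (e k) + s * b`, whose restriction to `s = 1` is
`rightSide (e, b)`. -/
def rightSideForm (q : (Fin α → Fin β) × ZMod 2) : (Fin β → ZMod 2) × ZMod 2 →+ ZMod 2 :=
  (∑ k, Pi.evalAddMonoidHom (fun _ => ZMod 2) (q.1 k)).coprod (AddMonoidHom.mulRight q.2)

theorem rightSideForm_apply (q : (Fin α → Fin β) × ZMod 2) (x : Fin β → ZMod 2) (s : ZMod 2) :
    rightSideForm q (x, s) = ∑ k, x (q.1 k) + s * q.2 := by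
  simp [rightSideForm]

theorem eq_zero_iff_forall_apply_one {A : Type*} [AddGroup A] {f : A × ZMod 2 →+ ZMod 2} :
    f = 0 ↔ ∀ x, f (x, 1) = 0 := by
  refine ⟨fun h x => by simp [h], fun h => AddMonoidHom.ext fun ⟨x, s⟩ => ?_⟩
  obtain rfl | rfl := eq_zero_or_eq_one s
  · simpa [h] using f.map_sub (x, 1) (0, 1)
  · exact h x

theorem sum_rightSide_eq_zero_iff {k : ℕ} (q : Fin k → (Fin α → Fin β) × ZMod 2) :
    ∑ j, rightSide (q j) = 0 ↔ ∑ j, rightSideForm (q j) = 0 := by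
  simp [eq_zero_iff_forall_apply_one, funext_iff, rightSideForm_apply, rightSide]

theorem satisfiable_iff {n m : ℕ} (φ : Fin m → Fin n × Fin n × (Fin α → Fin β) × ZMod 2) :
    Satisfiable φ ↔ IsSatisfiable rightSide φ := by
  refine ⟨fun h => ?_, fun ⟨Y, hY⟩ x => ⟨fun v => Y v x, fun i => congrFun (hY i) x⟩⟩
  choose y hy using h
  exact ⟨fun v x => y x v, fun i => funext fun x => hy x i⟩

theorem psat_eq_satProb (α β n m : ℕ) :
    PSAT α β n m = satProb (Fin n) (rightSide : (Fin α → Fin β) × ZMod 2 → _) m := by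
  simp only [PSAT, satProb, prob, satisfiable_iff, ← Nat.card_coe_set_eq, Set.coe_ofPred]
  congr 1
  simp
  ring

theorem expect_signChar_rightSideForm (x : Fin β → ZMod 2) (s : ZMod 2) :
    𝔼 q : (Fin α → Fin β) × ZMod 2, signChar (rightSideForm q (x, s)) =
      if s = 0 then (𝔼 i, signChar (x i)) ^ α else 0 := by
  have hfactor : 𝔼 q : (Fin α → Fin β) × ZMod 2, signChar (rightSideForm q (x, s)) =
      (𝔼 i, signChar (x i)) ^ α * 𝔼 b, signChar (s * b) := by
    simp only [Finset.expect_pow, Fintype.piFinset_univ, Fintype.expect_mul_expect,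
      rightSideForm_apply, AddChar.map_add_eq_mul, addChar_map_sum,
      ← Finset.univ_product_univ, Finset.expect_product]
  rw [hfactor]
  obtain rfl | rfl := eq_zero_or_eq_one s
  · simp
  · simp [expect_signChar]

theorem expect_signChar_apply {ι : Type*} [Fintype ι] [Nonempty ι] (x : ι → ZMod 2) :
    𝔼 i, signChar (x i) = 1 - 2 * hammingNorm x / Fintype.card ι := by
  have hsign (i : ι) : signChar (x i) = 1 - 2 * if x i ≠ 0 then 1 else 0 := by
    by_cases h : x i = 0 <;> norm_num [signChar_eq_ite, h]
  simp only [hsign, Finset.expect_sub_distrib, Fintype.expect_const, ← Finset.mul_expect]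
  rw [Fintype.expect_eq_sum_div_card, Finset.sum_boole, hammingNorm, mul_div_assoc]

theorem sum_hammingNorm {ι R : Type*} [Fintype ι] [DecidableEq ι] [Semiring R] (f : ℕ → R) :
    ∑ x : ι → ZMod 2, f (hammingNorm x) =
      ∑ i ∈ Finset.range (Fintype.card ι + 1), (Fintype.card ι).choose i * f i := by
  simp only [← nsmul_eq_mul, ← Finset.card_univ, ← Finset.sum_powerset_apply_card,
    Finset.powerset_univ]
  refine Finset.sum_nbij' (fun x => Finset.univ.filter (x · ≠ 0))
    (fun s i => if i ∈ s then 1 else 0) ?_ ?_ ?_ ?_ ?_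
  · simp
  · simp
  · intro x _
    funext i
    obtain h | h := eq_zero_or_eq_one (x i) <;> simp [h]
  · intro s _
    ext i
    simp
  · intro x _
    rfl

theorem nonzeroSumProb_rightSide [NeZero β] (k : ℕ) :
    nonzeroSumProb (rightSide : (Fin α → Fin β) × ZMod 2 → _) (k + 1) =
      1 - (2 ^ (β + 1))⁻¹ * ∑ i ∈ Finset.range (β + 1),
        (β.choose i : ℝ) * ((1 - 2 * (i : ℝ) / β) ^ α) ^ (k + 1) := by
  have hzero : nonzeroSumProb (rightSide : (Fin α → Fin β) × ZMod 2 → _) (k + 1) =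
      1 - prob {q : Fin (k + 1) → (Fin α → Fin β) × ZMod 2 | ∑ j, rightSideForm (q j) = 0} := by
    rw [← prob_univ (Ω := Fin (k + 1) → (Fin α → Fin β) × ZMod 2), ← prob_sdiff (Set.subset_univ _)]
    simp only [nonzeroSumProb, ne_eq, sum_rightSide_eq_zero_iff]
    congr 1
    ext
    simp
  rw [hzero, prob_sum_eq_zero]
  congr 1
  calc 𝔼 a, (𝔼 q : (Fin α → Fin β) × ZMod 2, signChar (rightSideForm q a)) ^ (k + 1)
      = 𝔼 x : Fin β → ZMod 2, ((1 - 2 * (hammingNorm x : ℝ) / β) ^ α) ^ (k + 1) / 2 := by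
        rw [← Finset.univ_product_univ, Finset.expect_product]
        refine Finset.expect_congr rfl fun x _ => ?_
        simp only [expect_signChar_rightSideForm]
        rw [expect_signChar_apply, Fintype.card_fin]
        simp [ite_pow, div_eq_inv_mul, NNRat.smul_def]
    _ = (2 ^ (β + 1))⁻¹ * ∑ i ∈ Finset.range (β + 1),
        (β.choose i : ℝ) * ((1 - 2 * (i : ℝ) / β) ^ α) ^ (k + 1) := by
        have hsum := sum_hammingNorm (ι := Fin β)
          fun i => ((1 - 2 * (i : ℝ) / β) ^ α) ^ (k + 1)
        rw [Fintype.card_fin] at hsum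
        rw [← hsum, Fintype.expect_eq_sum_div_card, ← Finset.sum_div, Fintype.card_fun, ZMod.card,
          Fintype.card_fin, div_div]
        push_cast
        rw [← pow_succ', div_eq_inv_mul]

end Labels

section LimitFunction

open scoped ContDiff

variable {ι : Type*} {s : Finset ι} {c ρ : ι → ℝ} {t τ : ℝ}

/-- The generating function `∑ k, (∑ i ∈ s, c i * ρ i ^ (k + 1)) * t ^ k` in closed form. -/
def powerSumSeries (s : Finset ι) (c ρ : ι → ℝ) (t : ℝ) : ℝ :=
  ∑ i ∈ s, c i * (ρ i / (1 - t * ρ i))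

/-- The solution `∏ i ∈ s, (1 - t * ρ i) ^ (c i / 2)` of `L' = -(F * L / 2)`, `L 0 = 1` for
`F = powerSumSeries s c ρ`. -/
def limitFunction (s : Finset ι) (c ρ : ι → ℝ) (t : ℝ) : ℝ :=
  ∏ i ∈ s, (1 - t * ρ i) ^ (c i / 2)

theorem limitFunction_zero : limitFunction s c ρ 0 = 1 := by simp [limitFunction]

theorem one_sub_mul_pos {r : ℝ} (hr : |r| ≤ 1) (ht : t ∈ Set.Icc 0 τ) (hτ : τ < 1) :
    0 < 1 - t * r :=
  sub_pos.2 <| (mul_le_of_le_one_right ht.1 (abs_le.1 hr).2).trans_lt (ht.2.trans_lt hτ)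

theorem limitFunction_pos (hρ : ∀ i ∈ s, |ρ i| ≤ 1) (hτ : τ < 1) (ht : t ∈ Set.Icc 0 τ) :
    0 < limitFunction s c ρ t :=
  Finset.prod_pos fun i hi => Real.rpow_pos_of_pos (one_sub_mul_pos (hρ i hi) ht hτ) _

theorem hasSum_powerSumSeries (hρ : ∀ i ∈ s, |ρ i| ≤ 1) (hτ : τ < 1) (ht : t ∈ Set.Icc 0 τ) :
    HasSum (fun k => (∑ i ∈ s, c i * ρ i ^ (k + 1)) * t ^ k) (powerSumSeries s c ρ t) := by
  simp only [Finset.sum_mul]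
  refine hasSum_sum fun i hi => ?_
  have hlt : ‖t * ρ i‖ < 1 := by
    rw [norm_mul, Real.norm_of_nonneg ht.1]
    exact (mul_le_of_le_one_right ht.1 (hρ i hi)).trans_lt (ht.2.trans_lt hτ)
  have hgeom := (hasSum_geometric_of_norm_lt_one hlt).mul_left (c i * ρ i)
  rw [← div_eq_mul_inv, mul_div_assoc] at hgeom
  exact hgeom.congr_fun fun k => by ring

theorem contDiffOn_limitFunction (hρ : ∀ i ∈ s, |ρ i| ≤ 1) (hτ : τ < 1) :
    ContDiffOn ℝ ∞ (limitFunction s c ρ) (Set.Icc 0 τ) :=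
  contDiffOn_prod fun i hi => ContDiffOn.rpow_const_of_ne (by fun_prop) fun _ ht =>
    (one_sub_mul_pos (hρ i hi) ht hτ).ne'

theorem contDiffOn_powerSumSeries (hρ : ∀ i ∈ s, |ρ i| ≤ 1) (hτ : τ < 1) :
    ContDiffOn ℝ ∞ (powerSumSeries s c ρ) (Set.Icc 0 τ) :=
  ContDiffOn.sum fun i hi => contDiffOn_const.mul <| contDiffOn_const.div (by fun_prop)
    fun _ ht => (one_sub_mul_pos (hρ i hi) ht hτ).ne'

theorem hasDerivAt_limitFunction (ht : ∀ i ∈ s, 0 < 1 - t * ρ i) :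
    HasDerivAt (limitFunction s c ρ)
      (-(powerSumSeries s c ρ t * limitFunction s c ρ t / 2)) t := by
  classical
  have hfactor (i : ι) (hi : i ∈ s) : HasDerivAt (fun t => (1 - t * ρ i) ^ (c i / 2))
      ((1 - t * ρ i) ^ (c i / 2) * (-(c i * (ρ i / (1 - t * ρ i))) / 2)) t := by
    convert (((hasDerivAt_id' t).mul_const (ρ i)).const_sub 1).rpow_const
      (Or.inl (ht i hi).ne') using 1
    rw [Real.rpow_sub_one (ht i hi).ne']
    ring
  refine (HasDerivAt.fun_finsetProd hfactor).congr_deriv ?_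
  rw [powerSumSeries, Finset.sum_mul, Finset.sum_div, ← Finset.sum_neg_distrib]
  refine Finset.sum_congr rfl fun i hi => ?_
  rw [limitFunction, ← Finset.prod_erase_mul s _ hi, smul_eq_mul]
  ring

theorem exists_lipschitzOnWith_limitFunction_deriv (hρ : ∀ i ∈ s, |ρ i| ≤ 1) (hτ : τ < 1) :
    ∃ K, LipschitzOnWith K (fun t => -(powerSumSeries s c ρ t * limitFunction s c ρ t / 2))
      (Set.Icc 0 τ) :=
  ((((contDiffOn_powerSumSeries hρ hτ).mul (contDiffOn_limitFunction hρ hτ)).div_const 2).neg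
    ).exists_lipschitzOnWith (by simp) (convex_Icc 0 τ) isCompact_Icc

end LimitFunction

section Evaluation

/-- The mean of `signChar (∑ k, x (e k))` over all `e : Fin α → Fin β`, for an assignment `x` of
Hamming weight `i`. -/
def weightBias (α β i : ℕ) : ℝ := (1 - 2 * (i : ℝ) / β) ^ α

/-- The coefficient of `weightBias α β i ^ k` in `nonzeroSumProb rightSide k`, for `k ≠ 0`. -/
def weightCoeff (β i : ℕ) : ℝ := (if i = 0 then 1 else 0) - (2 ^ (β + 1))⁻¹ * β.choose i

variable {α β : ℕ}

theorem weightBias_zero : weightBias α β 0 = 1 := by simp [weightBias]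

theorem weightBias_self [NeZero β] : weightBias α β β = (-1) ^ α := by
  rw [weightBias, mul_div_cancel_right₀ _ (NeZero.ne _)]
  norm_num

theorem abs_weightBias_le_one {i : ℕ} (hi : i ∈ Finset.range (β + 1)) :
    |weightBias α β i| ≤ 1 := by
  have hle : (i : ℝ) / β ≤ 1 :=
    div_le_one_of_le₀ (Nat.cast_le.2 (Finset.mem_range_succ_iff.1 hi)) β.cast_nonneg
  have hnonneg : 0 ≤ (i : ℝ) / β := by positivity
  rw [weightBias, abs_pow, mul_div_assoc]
  exact pow_le_one₀ (abs_nonneg _) (abs_le.2 ⟨by linarith, by linarith⟩)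

theorem nonzeroSumProb_rightSide_eq_sum [NeZero β] (k : ℕ) :
    nonzeroSumProb (rightSide : (Fin α → Fin β) × ZMod 2 → _) (k + 1) =
      ∑ i ∈ Finset.range (β + 1), weightCoeff β i * weightBias α β i ^ (k + 1) := by
  simp only [nonzeroSumProb_rightSide, weightCoeff, sub_mul, Finset.sum_sub_distrib, ite_mul,
    zero_mul, one_mul, Finset.sum_ite_eq', mul_assoc, Finset.mul_sum]
  simp [weightBias]

theorem prod_weightBias [NeZero β] (c : ℕ) (hc : c = if Even α then 2 else 1) (t : ℝ) :
    ∏ i ∈ Finset.range (β + 1), (1 - t * weightBias α β i) ^ β.choose i =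
      (1 - t) ^ c * ∏ i ∈ Finset.Icc 1 (β + 1 - c), (1 - t * weightBias α β i) ^ β.choose i := by
  have hzero : Finset.range (β + 1) = insert 0 (Finset.Icc 1 β) := by
    ext i
    simp only [Finset.mem_range, Finset.mem_insert, Finset.mem_Icc]
    omega
  rw [hzero, Finset.prod_insert (by simp), weightBias_zero, mul_one, Nat.choose_zero_right, pow_one]
  split_ifs at hc with hα
  · have hlast : Finset.Icc 1 β = insert β (Finset.Icc 1 (β + 1 - c)) := by
      ext i
      have := NeZero.pos β
      simp only [Finset.mem_insert, Finset.mem_Icc]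
      omega
    rw [hlast, Finset.prod_insert (by simp [hc]; grind), weightBias_self, hα.neg_one_pow, hc]
    simp
    ring
  · simp [hc]

theorem two_rpow_neg_sub_two (n : ℕ) : (2 : ℝ) ^ (-(n : ℝ) - 2) = (2 ^ (n + 1))⁻¹ / 2 := by
  rw [Real.rpow_sub two_pos, Real.rpow_neg zero_le_two, Real.rpow_natCast, Real.rpow_two]
  ring

theorem limitFunction_weight [NeZero β] {c : ℕ} (hc : c = if Even α then 2 else 1) {t : ℝ}
    (ht : t ∈ Set.Ico 0 1) :
    limitFunction (Finset.range (β + 1)) (weightCoeff β) (weightBias α β) t =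
      (∏ i ∈ Finset.Icc 1 (β + 1 - c), (1 - t * weightBias α β i) ^ β.choose i) ^
        (-((2 : ℝ) ^ (-(β : ℝ) - 2))) *
      (1 - t) ^ ((1 : ℝ) / 2 - (c : ℝ) * (2 : ℝ) ^ (-(β : ℝ) - 2)) := by
  set ε : ℝ := (2 : ℝ) ^ (-(β : ℝ) - 2) with hε
  have hpos {i : ℕ} (hi : i ∈ Finset.range (β + 1)) : 0 < 1 - t * weightBias α β i :=
    one_sub_mul_pos (abs_weightBias_le_one hi) ⟨ht.1, le_rfl⟩ ht.2
  have hfactor (i : ℕ) (hi : i ∈ Finset.range (β + 1)) :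
      (1 - t * weightBias α β i) ^ (weightCoeff β i / 2) =
        (if i = 0 then (1 - t) ^ ((1 : ℝ) / 2) else 1) *
          ((1 - t * weightBias α β i) ^ β.choose i) ^ (-ε) := by
    have hexp : weightCoeff β i / 2 = (if i = 0 then 1 / 2 else 0) + β.choose i * -ε := by
      rw [hε, two_rpow_neg_sub_two, weightCoeff]
      split_ifs <;> ring
    rw [hexp, Real.rpow_add (hpos hi), Real.rpow_mul (hpos hi).le, Real.rpow_natCast]
    split_ifs with h <;> simp [h, weightBias_zero]
  have hnonneg {i : ℕ} (hi : i ∈ Finset.range (β + 1)) :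
      0 ≤ (1 - t * weightBias α β i) ^ β.choose i := pow_nonneg (hpos hi).le _
  have ht' : 0 < 1 - t := sub_pos.2 ht.2
  rw [limitFunction, Finset.prod_congr rfl hfactor, Finset.prod_mul_distrib, Finset.prod_ite_eq',
    if_pos (by simp), Real.finsetProd_rpow _ _ fun i hi => hnonneg hi, prod_weightBias c hc,
    Real.mul_rpow (pow_nonneg ht'.le _) (Finset.prod_nonneg fun i hi => hnonneg (by grind)),
    ← Real.rpow_natCast, ← Real.rpow_mul ht'.le, ← mul_assoc, ← Real.rpow_add ht']
  ring_nf

end Evaluation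

section Asymptotics

open Asymptotics Filter

theorem isBigO_div_sub_one {ι : Type*} {l : Filter ι} {f g h : ι → ℝ} {δ : ℝ} (hδ : 0 < δ)
    (hg : ∀ᶠ n in l, δ ≤ g n) (hf : (fun n => f n - g n) =O[l] h) :
    (fun n => f n / g n - 1) =O[l] h := by
  have hinv : (fun n => (g n)⁻¹) =O[l] fun _ => (1 : ℝ) := by
    refine IsBigO.of_bound δ⁻¹ (hg.mono fun n hn => ?_)
    have hpos : 0 < g n := hδ.trans_le hn
    rw [norm_inv, Real.norm_of_nonneg hpos.le, norm_one, mul_one]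
    exact inv_anti₀ hδ hn
  refine (hf.mul hinv).congr' (hg.mono fun n hn => ?_) (.of_forall fun n => mul_one (h n))
  have hne : g n ≠ 0 := (hδ.trans_le hn).ne'
  field_simp

theorem psat_sub_limitFunction_isBigO (α : ℕ) {β : ℕ} [NeZero β] {τ : ℝ} (hτ0 : 0 < τ) (hτ : τ < 1)
    {m : ℕ → ℕ} (hm : ∀ᶠ n in atTop, 2 * (m n : ℝ) / n ≤ τ) :
    (fun n => PSAT α β n (m n) - limitFunction (Finset.range (β + 1)) (weightCoeff β)
      (weightBias α β) (2 * (m n : ℝ) / n)) =O[atTop] fun n => (n : ℝ)⁻¹ := by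
  have hbias (i : ℕ) (hi : i ∈ Finset.range (β + 1)) := abs_weightBias_le_one (α := α) hi
  obtain ⟨K, hK⟩ := exists_lipschitzOnWith_limitFunction_deriv (c := weightCoeff β) hbias hτ
  simp only [psat_eq_satProb]
  refine satProb_sub_isBigO _ hτ0 hτ (fun t ht => ?_) limitFunction_zero (fun t ht => ?_) hK hm
  · simpa only [nonzeroSumProb_rightSide_eq_sum] using hasSum_powerSumSeries hbias hτ ht
  · exact (hasDerivAt_limitFunction fun i hi =>
      one_sub_mul_pos (hbias i hi) ht hτ).hasDerivWithinAt

theorem exists_le_limitFunction {ι : Type*} {s : Finset ι} {c ρ : ι → ℝ} {τ : ℝ}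
    (hρ : ∀ i ∈ s, |ρ i| ≤ 1) (hτ0 : 0 ≤ τ) (hτ : τ < 1) :
    ∃ δ > 0, ∀ t ∈ Set.Icc 0 τ, δ ≤ limitFunction s c ρ t := by
  obtain ⟨t₀, ht₀, hmin⟩ := isCompact_Icc.exists_isMinOn (Set.nonempty_Icc.2 hτ0)
    (contDiffOn_limitFunction (c := c) hρ hτ).continuousOn
  exact ⟨_, limitFunction_pos hρ hτ ht₀, fun t ht => hmin ht⟩

end Asymptotics

theorem qxorsat_subcritical_general (β α : ℕ) (hβ : 1 ≤ β)
    (c : ℕ) (hc : c = if Even α then 2 else 1)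
    (χ : ℝ → ℝ)
    (hχ : ∀ x : ℝ, χ x = ∏ i ∈ Finset.Icc 1 (β + 1 - c),
      (1 - x * (1 - 2 * (i : ℝ) / β) ^ α) ^ (β.choose i))
    (m : ℕ → ℕ) (hm : ∃ b : ℝ, b < 1 / 2 ∧ ∀ᶠ n : ℕ in Filter.atTop, (m n : ℝ) / n ≤ b) :
    (fun n : ℕ =>
        PSAT α β n (m n) /
          (χ (2 * (m n : ℝ) / n) ^ (-((2 : ℝ) ^ (-(β : ℝ) - 2))) *
            (1 - 2 * (m n : ℝ) / n) ^ ((1 : ℝ) / 2 - (c : ℝ) * (2 : ℝ) ^ (-(β : ℝ) - 2))) - 1)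
      =O[Filter.atTop] fun n => (n : ℝ)⁻¹ := by
  have : NeZero β := ⟨Nat.one_le_iff_ne_zero.1 hβ⟩
  obtain ⟨b, hb, hmb⟩ := hm
  obtain ⟨τ, hbτ, hτ⟩ := exists_between (show max (2 * b) 0 < 1 by grind)
  have hτ0 : 0 < τ := (le_max_right _ _).trans_lt hbτ
  have hmτ : ∀ᶠ n in Filter.atTop, 2 * (m n : ℝ) / n ∈ Set.Icc 0 τ := by
    filter_upwards [hmb] with n hn
    exact ⟨by positivity, by linarith [le_max_left (2 * b) 0, mul_div_assoc 2 (m n : ℝ) n]⟩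
  obtain ⟨δ, hδ, hδle⟩ := exists_le_limitFunction (c := weightCoeff β)
    (fun i hi => abs_weightBias_le_one (α := α) hi) hτ0.le hτ
  refine (isBigO_div_sub_one hδ (hmτ.mono fun n hn => hδle _ hn)
    (psat_sub_limitFunction_isBigO α hτ0 hτ (hmτ.mono fun n hn => hn.2))).congr' ?_ .rfl
  filter_upwards [hmτ] with n hn
  rw [limitFunction_weight hc ⟨hn.1, hn.2.trans_lt hτ⟩, hχ]
  rfl

/-- phase transition of quantified 2-Xor-SAT, subcritical regime. -/
theorem qxorsat_subcritical (β α : ℕ) (hβ : 1 ≤ β) (hα : 1 ≤ α)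
    (c : ℕ) (hc : c = if Even α then 2 else 1)
    (χ : ℝ → ℝ)
    (hχ : ∀ x : ℝ, χ x = ∏ i ∈ Finset.Icc 1 (β + 1 - c),
      (1 - x * (1 - 2 * (i : ℝ) / β) ^ α) ^ (β.choose i))
    (m : ℕ → ℕ)
    (hm : ∃ a b : ℝ, 0 < a ∧ a ≤ b ∧ b < 1 / 2 ∧
      ∀ᶠ n : ℕ in Filter.atTop, a ≤ (m n : ℝ) / n ∧ (m n : ℝ) / n ≤ b) :
    Filter.Tendsto (fun n : ℕ =>
        PSAT α β n (m n) /
          (χ (2 * (m n : ℝ) / n) ^ (-((2 : ℝ) ^ (-(β : ℝ) - 2))) *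
            (1 - 2 * (m n : ℝ) / n) ^ ((1 : ℝ) / 2 - (c : ℝ) * (2 : ℝ) ^ (-(β : ℝ) - 2))))
      Filter.atTop (nhds 1) := by
  obtain ⟨_, b, -, -, hb, hmb⟩ := hm
  exact tendsto_sub_nhds_zero_iff.1 <| (qxorsat_subcritical_general β α hβ c hc χ hχ m
    ⟨b, hb, hmb.mono fun _ hn => hn.2⟩).trans_tendsto tendsto_inv_atTop_nhds_zero_nat

end

end Inhomog
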